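/- (Theorem 1 contains the Han-Kobayashi region) Let (S,T) be a discrete memoryless correlated source with finite alphabets in which S and T are independent, and let R1 = H(S), R2 = H(T). Suppose there exist finite-valued random variables Q, W1, W2, X1, X2 with joint distribution p(q,w1,w2,x1,x2) = p(q)·p(w1|q)·p(w2|q)·p(x1|w1,q)·p(x2|w2,q), independent of (S,T), and let Y1, Y2 be obtained from (X1,X2) through the channel p(y1,y2|x1,x2). If the seven Han-Kobayashi inequalities hold: R1 < I(X1; Y1 | Q,W2); R2 < I(X2; Y2 | Q,W1); R1+R2 < I(X1; Y1 | Q,W1,W2) + I(W1,X2; Y2 | Q); R1+R2 < I(X2; Y2 | Q,W1,W2) + I(W2,X1; Y1 | Q); R1+R2 < I(W2,X1; Y1 | Q,W1) + I(W1,X2; Y2 | Q,W2); 2R1+R2 < I(X1; Y1 | Q,W1,W2) + I(W2,X1; Y1 | Q) + I(W1,X2; Y2 | Q,W2); R1+2R2 < I(X2; Y2 | Q,W1,W2) + I(W1,X2; Y2 | Q) + I(W2,X1; Y1 | Q,W1); then the source (S,T) is admissible for the discrete memoryless interference channel p(y1,y2|x1,x2). -/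

import Mathlib

/-!
The code is the Han-Kobayashi random superposition code, preceded by an almost lossless compression
of the sources.  User `i` maps a typical source block to a pair of messages, a common one of rate
`cᵢ` and a private one of rate `kᵢ`, where `kᵢ + cᵢ` exceeds the entropy of its source.  Common
messages index cloud centres `Wᵢ`, and private messages index satellites `Xᵢ` around each of them.

A receiver does not need to know the interferer's private layer, so it is described by a `Link`: the
own layers `W`, `X`, the interferer's cloud `U`, and the remaining interference `Z`, averaged out as
noise.  It looks for own messages that pass likelihood-ratio tests for some common message of the
interferer, which need not be identified.  `Link.one_shot` bounds the error of this decoder by the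
probability that the true messages fail a test plus a union bound over wrong messages; by the law of
large numbers `aep` both terms vanish under the conditions `Link.Rates`.  Averaging over the codebooks
and fixing a good one gives `HK.admissible_of_rates`.  The expected log-likelihood ratios in
`Link.Rates` are identified with the conditional mutual informations of the theorem by
`Link.cmi_eq_J`.

It remains to split the rates.  Write `a₁ = I(X1;Y1|Q,W1,W2)`, `e₁ = I(W2,X1;Y1|Q,W1)`, and `a₂`, `e₂`
for the quantities with the users exchanged.  If `R1 < a₁ + e₂` and `R2 < a₂ + e₁`, Fourier-Motzkin
elimination shows that the seven inequalities suffice for a split to exist (`fm_case`).  These two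
bounds are not among the hypotheses.  If for instance `R1 ≥ a₁ + e₂`, the inequalities force
`R1 + R2 < I(W2,X1;Y1|Q)` and `R2 < I(W1,X2;Y2|Q) - I(W1,X2;Y2|Q,W2) = I(W2;Y2|Q)`.  Then the common
layer of user 1 can be dropped: user 1 sends everything privately, user 2 sends everything as a common
message, and receiver 2 treats user 1 as noise (`HK.admissible_case_two`), which works for
`R2 < I(X2;Y2|Q)`, a weaker condition by `Link.Jg_sub_Je_le`.  The other case is symmetric.
-/



/-- Shannon entropy (in bits) of the push-forward of the pmf `p` under the map `f`. -/
noncomputable def margEnt {Ω α : Type*} [Fintype Ω] [Fintype α] [DecidableEq α]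
    (p : Ω → ℝ) (f : Ω → α) : ℝ :=
  ∑ a : α, -((∑ ω : Ω, if f ω = a then p ω else 0) *
      Real.logb 2 (∑ ω : Ω, if f ω = a then p ω else 0))

/-- Conditional entropy H(f | g). -/
noncomputable def condEnt {Ω α β : Type*} [Fintype Ω] [Fintype α] [Fintype β]
    [DecidableEq α] [DecidableEq β] (p : Ω → ℝ) (f : Ω → α) (g : Ω → β) : ℝ :=
  margEnt p (fun ω => (f ω, g ω)) - margEnt p g

/-- Mutual information I(f ; g). -/
noncomputable def mi {Ω α β : Type*} [Fintype Ω] [Fintype α] [Fintype β]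
    [DecidableEq α] [DecidableEq β] (p : Ω → ℝ) (f : Ω → α) (g : Ω → β) : ℝ :=
  margEnt p f + margEnt p g - margEnt p (fun ω => (f ω, g ω))

/-- Conditional mutual information I(f ; g | h). -/
noncomputable def cmi {Ω α β γ : Type*} [Fintype Ω] [Fintype α] [Fintype β] [Fintype γ]
    [DecidableEq α] [DecidableEq β] [DecidableEq γ]
    (p : Ω → ℝ) (f : Ω → α) (g : Ω → β) (h : Ω → γ) : ℝ :=
  margEnt p (fun ω => (f ω, h ω)) + margEnt p (fun ω => (g ω, h ω))
    - margEnt p (fun ω => (f ω, g ω, h ω)) - margEnt p h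

/-- Shannon entropy (in bits) of a pmf. -/
noncomputable def pmfEnt {α : Type*} [Fintype α] (q : α → ℝ) : ℝ :=
  ∑ a : α, -(q a * Real.logb 2 (q a))

/-- Probability of error at decoder 1 of a length-`n` source-channel code for the
interference channel `chan` with source `pST`. -/
noncomputable def icPe1 {S T X1 X2 Y1 Y2 : Type*} [Fintype S] [Fintype T] [Fintype X1]
    [Fintype X2] [Fintype Y1] [Fintype Y2] [DecidableEq S]
    (pST : S → T → ℝ) (chan : X1 → X2 → Y1 → Y2 → ℝ) (n : ℕ)
    (f1 : (Fin n → S) → Fin n → X1) (f2 : (Fin n → T) → Fin n → X2)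
    (φ1 : (Fin n → Y1) → Fin n → S) : ℝ :=
  ∑ sn : Fin n → S, ∑ tn : Fin n → T, ∑ y1n : Fin n → Y1, ∑ y2n : Fin n → Y2,
    if φ1 y1n ≠ sn then
      (∏ i, pST (sn i) (tn i)) * ∏ i, chan (f1 sn i) (f2 tn i) (y1n i) (y2n i)
    else 0

/-- Probability of error at decoder 2. -/
noncomputable def icPe2 {S T X1 X2 Y1 Y2 : Type*} [Fintype S] [Fintype T] [Fintype X1]
    [Fintype X2] [Fintype Y1] [Fintype Y2] [DecidableEq T]
    (pST : S → T → ℝ) (chan : X1 → X2 → Y1 → Y2 → ℝ) (n : ℕ)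
    (f1 : (Fin n → S) → Fin n → X1) (f2 : (Fin n → T) → Fin n → X2)
    (φ2 : (Fin n → Y2) → Fin n → T) : ℝ :=
  ∑ sn : Fin n → S, ∑ tn : Fin n → T, ∑ y1n : Fin n → Y1, ∑ y2n : Fin n → Y2,
    if φ2 y2n ≠ tn then
      (∏ i, pST (sn i) (tn i)) * ∏ i, chan (f1 sn i) (f2 tn i) (y1n i) (y2n i)
    else 0

/-- The source `pST` is admissible for the discrete memoryless interference channel `chan`. -/
def ICAdmissible {S T X1 X2 Y1 Y2 : Type*} [Fintype S] [Fintype T] [Fintype X1]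
    [Fintype X2] [Fintype Y1] [Fintype Y2] [DecidableEq S] [DecidableEq T]
    (pST : S → T → ℝ) (chan : X1 → X2 → Y1 → Y2 → ℝ) : Prop :=
  ∀ ε : ℝ, 0 < ε → ε < 1 → ∃ N : ℕ, ∀ n : ℕ, N ≤ n →
    ∃ (f1 : (Fin n → S) → Fin n → X1) (f2 : (Fin n → T) → Fin n → X2)
      (φ1 : (Fin n → Y1) → Fin n → S) (φ2 : (Fin n → Y2) → Fin n → T),
      max (icPe1 pST chan n f1 f2 φ1) (icPe2 pST chan n f1 f2 φ2) ≤ ε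

/-- Sample space for the channel variables of the Han-Kobayashi scheme. -/
abbrev Omega7 (Q W1 W2 X1 X2 Y1 Y2 : Type*) := Q × W1 × W2 × X1 × X2 × Y1 × Y2

section Proj
variable {Q W1 W2 X1 X2 Y1 Y2 : Type*}
def qQ  (ω : Omega7 Q W1 W2 X1 X2 Y1 Y2) : Q := ω.1
def qW1 (ω : Omega7 Q W1 W2 X1 X2 Y1 Y2) : W1 := ω.2.1
def qW2 (ω : Omega7 Q W1 W2 X1 X2 Y1 Y2) : W2 := ω.2.2.1
def qX1 (ω : Omega7 Q W1 W2 X1 X2 Y1 Y2) : X1 := ω.2.2.2.1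
def qX2 (ω : Omega7 Q W1 W2 X1 X2 Y1 Y2) : X2 := ω.2.2.2.2.1
def qY1 (ω : Omega7 Q W1 W2 X1 X2 Y1 Y2) : Y1 := ω.2.2.2.2.2.1
def qY2 (ω : Omega7 Q W1 W2 X1 X2 Y1 Y2) : Y2 := ω.2.2.2.2.2.2
end Proj
/-! ### Sums over product spaces and a law of large numbers -/

lemma sum_pi_prod {ι α : Type*} [Fintype ι] [DecidableEq ι] [Fintype α] (f : ι → α → ℝ) :
    ∑ x : ι → α, ∏ i, f i (x i) = ∏ i, ∑ a, f i a := by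
  rw [Finset.prod_univ_sum, Fintype.piFinset_univ]

/-- An expectation over an i.i.d. family separates into the coordinate `i` and the others. -/
lemma sum_pi_split {ι α : Type*} [Fintype ι] [DecidableEq ι] [Fintype α] (p : α → ℝ) (i : ι)
    (F : α → ({j // j ≠ i} → α) → ℝ) :
    ∑ f : ι → α, (∏ j, p (f j)) * F (f i) (fun j => f j)
      = ∑ a, p a * ∑ g : {j // j ≠ i} → α, (∏ j, p (g j)) * F a g := by
  rw [← (Equiv.piSplitAt i (fun _ => α)).symm.sum_comp, Fintype.sum_prod_type]
  refine Finset.sum_congr rfl fun a _ => ?_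
  rw [Finset.mul_sum]
  refine Finset.sum_congr rfl fun g _ => ?_
  have h1 : (Equiv.piSplitAt i (fun _ => α)).symm (a, g) i = a := by simp [Equiv.piSplitAt]
  have h2 : ∀ j : {j // j ≠ i}, (Equiv.piSplitAt i (fun _ => α)).symm (a, g) j = g j := by
    intro j; simp [Equiv.piSplitAt, j.2]
  have h3 : ∏ j, p ((Equiv.piSplitAt i (fun _ => α)).symm (a, g) j)
      = p a * ∏ j : {j // j ≠ i}, p (g j) := by
    rw [Fintype.prod_eq_mul_prod_subtype_ne _ i, h1]
    congr 1
    exact Finset.prod_congr rfl fun j _ => by rw [h2]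
  rw [h3, h1, mul_assoc]
  congr 3
  funext j
  exact h2 j

lemma sum_pi_one {ι α : Type*} [Fintype ι] [DecidableEq ι] [Fintype α] (p : α → ℝ)
    (hp : ∑ a, p a = 1) (i : ι) (F : α → ℝ) :
    ∑ f : ι → α, (∏ j, p (f j)) * F (f i) = ∑ a, p a * F a := by
  have h : ∑ g : {j // j ≠ i} → α, ∏ j, p (g j) = 1 := by
    rw [sum_pi_prod (fun _ => p)]; simp [hp]
  rw [sum_pi_split p i (fun a _ => F a)]
  simp only [← Finset.sum_mul, h, one_mul]

lemma sum_pi_two {ι α : Type*} [Fintype ι] [DecidableEq ι] [Fintype α] (p : α → ℝ)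
    (hp : ∑ a, p a = 1) (i j : ι) (hij : j ≠ i) (F : α → α → ℝ) :
    ∑ f : ι → α, (∏ j, p (f j)) * F (f i) (f j) = ∑ a, p a * ∑ b, p b * F a b := by
  have := sum_pi_split p i (fun a g => F a (g ⟨j, hij⟩))
  rw [this]
  refine Finset.sum_congr rfl fun a _ => ?_
  rw [sum_pi_one p hp (⟨j, hij⟩ : {j // j ≠ i}) (fun b => F a b)]

lemma sum_arrow_prod {ι α β : Type*} [Fintype ι] [DecidableEq ι] [Fintype α] [Fintype β]
    (F : (ι → α) → (ι → β) → ℝ) :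
    ∑ f : ι → α × β, F (fun i => (f i).1) (fun i => (f i).2) = ∑ a, ∑ b, F a b := by
  rw [← (Equiv.arrowProdEquivProdArrow ι (fun _ => α) (fun _ => β)).symm.sum_comp,
    Fintype.sum_prod_type]
  rfl

lemma wsum_comm {α β : Type*} [Fintype α] [Fintype β] (p : α → ℝ) (q : β → ℝ) (F : α → β → ℝ) :
    ∑ a, p a * ∑ b, q b * F a b = ∑ b, q b * ∑ a, p a * F a b := by
  simp only [Finset.mul_sum]
  rw [Finset.sum_comm]
  exact Finset.sum_congr rfl fun _ _ => Finset.sum_congr rfl fun _ _ => by ring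

lemma wsum_mono {α : Type*} [Fintype α] {p : α → ℝ} (hp : ∀ a, 0 ≤ p a) {F G : α → ℝ}
    (h : ∀ a, F a ≤ G a) : ∑ a, p a * F a ≤ ∑ a, p a * G a :=
  Finset.sum_le_sum fun a _ => mul_le_mul_of_nonneg_left (h a) (hp a)

lemma wsum_const {α : Type*} [Fintype α] {p : α → ℝ} (hp : ∑ a, p a = 1) (c : ℝ) :
    ∑ a, p a * c = c := by rw [← Finset.sum_mul, hp, one_mul]

/-- A variable of positive mean has an exponential moment below one: the function
`t ↦ E exp (-t g)` equals one at `t = 0` and has negative derivative there. -/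
lemma exists_exp_moment_lt_one {Ω : Type*} [Fintype Ω] (p : Ω → ℝ) (hs : ∑ ω, p ω = 1)
    (g : Ω → ℝ) (hg : 0 < ∑ ω, p ω * g ω) :
    ∃ t : ℝ, 0 < t ∧ ∑ ω, p ω * Real.exp (-t * g ω) < 1 := by
  have hd : HasDerivAt (fun t : ℝ => ∑ ω, p ω * Real.exp (-t * g ω)) (-∑ ω, p ω * g ω) 0 := by
    have : ∀ ω ∈ Finset.univ, HasDerivAt (fun t : ℝ => p ω * Real.exp (-t * g ω))
        (p ω * (Real.exp (-0 * g ω) * (-1 * g ω))) 0 := fun ω _ =>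
      (((hasDerivAt_id (0 : ℝ)).neg.mul_const (g ω)).exp).const_mul (p ω)
    have h := HasDerivAt.fun_sum this
    have he : ∑ ω, (p ω * (Real.exp (-0 * g ω) * (-1 * g ω))) = -∑ ω, p ω * g ω := by
      rw [← Finset.sum_neg_distrib]
      exact Finset.sum_congr rfl fun ω _ => by simp
    rwa [he] at h
  have h1 := (hasDerivAt_iff_tendsto_slope.1 hd).mono_left
    (nhdsWithin_mono (0 : ℝ) (s := Set.Ioi 0) (fun x (hx : 0 < x) => ne_of_gt hx))
  have h2 := h1.eventually (gt_mem_nhds (show -∑ ω, p ω * g ω < 0 by linarith))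
  obtain ⟨t, ht, ht0⟩ := (h2.and self_mem_nhdsWithin).exists
  have ht0 : 0 < t := ht0
  refine ⟨t, ht0, ?_⟩
  rw [slope_def_field, sub_zero, div_neg_iff] at ht
  rcases ht with ht | ht
  · linarith [ht.2]
  · have := ht.1
    simp [hs] at this
    simpa using this

/-- The weak law of large numbers, one-sided, through the Chernoff bound. -/
lemma chernoff {Ω : Type*} [Fintype Ω] (p : Ω → ℝ) (hp : ∀ ω, 0 ≤ p ω) (hs : ∑ ω, p ω = 1)
    (f : Ω → ℝ) (δ : ℝ) (hδ : 0 < δ) :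
    Filter.Tendsto (fun n : ℕ => ∑ ω : Fin n → Ω, (∏ i, p (ω i)) *
      (if ∑ i, f (ω i) < n * ((∑ ω, p ω * f ω) - δ) then 1 else 0)) Filter.atTop (nhds 0) := by
  set μ := ∑ ω, p ω * f ω
  obtain ⟨t, ht, hlt⟩ := exists_exp_moment_lt_one p hs (fun ω => f ω - (μ - δ)) (by
    simp only [mul_sub, Finset.sum_sub_distrib, ← Finset.sum_mul, hs]
    change 0 < μ - _
    linarith)
  refine squeeze_zero (fun n => Finset.sum_nonneg fun ω _ => mul_nonneg
      (Finset.prod_nonneg fun i _ => hp _) (by split_ifs <;> norm_num)) (fun n => ?_)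
    (tendsto_pow_atTop_nhds_zero_of_lt_one
      (Finset.sum_nonneg fun ω _ => mul_nonneg (hp ω) (Real.exp_pos _).le) hlt)
  calc _ ≤ ∑ ω : Fin n → Ω, (∏ i, p (ω i)) * ∏ i, Real.exp (-t * (f (ω i) - (μ - δ))) := by
        refine Finset.sum_le_sum fun ω _ => mul_le_mul_of_nonneg_left ?_
          (Finset.prod_nonneg fun i _ => hp _)
        rw [← Real.exp_sum]
        split_ifs with h
        · rw [Real.one_le_exp_iff, ← Finset.mul_sum, Finset.sum_sub_distrib]
          simp only [Finset.sum_const, Finset.card_univ, Fintype.card_fin, nsmul_eq_mul]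
          nlinarith
        · positivity
    _ = _ := by
        simp only [← Finset.prod_mul_distrib]
        rw [sum_pi_prod (fun _ ω => p ω * Real.exp (-t * (f ω - (μ - δ))))]
        simp

/-- If `J` is below the expected log-ratio of `A` to `B`, then with probability tending to one the
product of the `A`s is at least `2 ^ (n * J)` times the product of the `B`s. -/
lemma aep {Ω : Type*} [Fintype Ω] (p : Ω → ℝ) (hp : ∀ ω, 0 ≤ p ω) (hs : ∑ ω, p ω = 1)
    (A B : Ω → ℝ) (hA : ∀ ω, 0 < p ω → 0 < A ω) (hB : ∀ ω, 0 < p ω → 0 < B ω)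
    (J : ℝ) (hJ : J < ∑ ω, p ω * Real.logb 2 (A ω / B ω)) :
    Filter.Tendsto (fun n : ℕ => ∑ ω : Fin n → Ω, (∏ i, p (ω i)) *
      (if ∏ i, A (ω i) < (2 : ℝ) ^ (n * J) * ∏ i, B (ω i) then 1 else 0))
      Filter.atTop (nhds 0) := by
  have h := chernoff p hp hs (fun ω => Real.logb 2 (A ω / B ω)) _ (sub_pos.2 hJ)
  refine squeeze_zero (fun n => Finset.sum_nonneg fun ω _ => mul_nonneg
      (Finset.prod_nonneg fun i _ => hp _) (by split_ifs <;> norm_num)) (fun n => ?_) h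
  refine Finset.sum_le_sum fun ω _ => ?_
  by_cases h0 : ∃ i, p (ω i) = 0
  · obtain ⟨i, hi⟩ := h0
    rw [Finset.prod_eq_zero (Finset.mem_univ i) hi]; simp
  push Not at h0
  have hpos : ∀ i, 0 < p (ω i) := fun i => lt_of_le_of_ne (hp _) (Ne.symm (h0 i))
  refine mul_le_mul_of_nonneg_left ?_ (Finset.prod_nonneg fun i _ => hp _)
  split_ifs with h1 h2 <;> norm_num
  apply h2
  have hBp : 0 < ∏ i, B (ω i) := Finset.prod_pos fun i _ => hB _ (hpos i)
  have hAp : 0 < ∏ i, A (ω i) := Finset.prod_pos fun i _ => hA _ (hpos i)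
  rw [← div_lt_iff₀ hBp, ← Finset.prod_div_distrib] at h1
  have h3 := Real.logb_lt_logb (b := 2) (by norm_num) (by
    exact Finset.prod_pos fun i _ => div_pos (hA _ (hpos i)) (hB _ (hpos i))) h1
  rw [Real.logb_rpow (by norm_num) (by norm_num), Real.logb_prod _ _ (fun i _ =>
    (div_pos (hA _ (hpos i)) (hB _ (hpos i))).ne')] at h3
  simpa using h3

set_option linter.unusedSectionVars false
/-! ### Random superposition codebooks -/

/-- Probability of a cluster: a cloud centre `w ~ pW` and satellites `x k`, i.i.d. from `pX w`. -/
noncomputable def clusterP {W X K : Type*} [Fintype K] (pW : W → ℝ) (pX : W → X → ℝ)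
    (c : W × (K → X)) : ℝ := pW c.1 * ∏ k, pX c.1 (c.2 k)

/-- Probability of a codebook: one independent cluster for every common message `l`. -/
noncomputable def bookP {W X K L : Type*} [Fintype K] [Fintype L] (pW : W → ℝ) (pX : W → X → ℝ)
    (c : L → W × (K → X)) : ℝ := ∏ l, clusterP pW pX (c l)

section Book
variable {W X K L : Type*} [Fintype W] [Fintype X] [Fintype K] [Fintype L]
  [DecidableEq K] [DecidableEq L] {pW : W → ℝ} {pX : W → X → ℝ}

lemma clusterP_nonneg (hW : ∀ w, 0 ≤ pW w) (hX : ∀ w x, 0 ≤ pX w x) (c : W × (K → X)) :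
    0 ≤ clusterP pW pX c :=
  mul_nonneg (hW _) (Finset.prod_nonneg fun _ _ => hX _ _)

lemma bookP_nonneg (hW : ∀ w, 0 ≤ pW w) (hX : ∀ w x, 0 ≤ pX w x) (c : L → W × (K → X)) :
    0 ≤ bookP pW pX c :=
  Finset.prod_nonneg fun _ _ => clusterP_nonneg hW hX _

lemma cluster_one (hX : ∀ w, ∑ x, pX w x = 1) (k : K) (F : W → X → ℝ) :
    ∑ c : W × (K → X), clusterP pW pX c * F c.1 (c.2 k)
      = ∑ w, pW w * ∑ x, pX w x * F w x := by
  rw [Fintype.sum_prod_type]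
  refine Finset.sum_congr rfl fun w _ => ?_
  rw [← sum_pi_one (pX w) (hX w) k (F w), Finset.mul_sum]
  exact Finset.sum_congr rfl fun g _ => by simp only [clusterP]; ring

lemma cluster_two (hX : ∀ w, ∑ x, pX w x = 1) (k k2 : K) (hk : k2 ≠ k) (F : W → X → X → ℝ) :
    ∑ c : W × (K → X), clusterP pW pX c * F c.1 (c.2 k) (c.2 k2)
      = ∑ w, pW w * ∑ x, pX w x * ∑ x2, pX w x2 * F w x x2 := by
  rw [Fintype.sum_prod_type]
  refine Finset.sum_congr rfl fun w _ => ?_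
  rw [← sum_pi_two (pX w) (hX w) k k2 hk (F w), Finset.mul_sum]
  exact Finset.sum_congr rfl fun g _ => by simp only [clusterP]; ring

lemma cluster_sum (hW : ∑ w, pW w = 1) (hX : ∀ w, ∑ x, pX w x = 1) :
    ∑ c : W × (K → X), clusterP pW pX c = 1 := by
  rw [Fintype.sum_prod_type, ← hW]
  refine Finset.sum_congr rfl fun w _ => ?_
  simp only [clusterP, ← Finset.mul_sum]
  rw [sum_pi_prod (fun _ => pX w)]
  simp [hX]

lemma bookP_sum (hW : ∑ w, pW w = 1) (hX : ∀ w, ∑ x, pX w x = 1) :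
    ∑ c : L → W × (K → X), bookP pW pX c = 1 := by
  unfold bookP
  rw [sum_pi_prod (fun _ => clusterP pW pX)]
  simp [cluster_sum hW hX]

lemma book_one (hW : ∑ w, pW w = 1) (hX : ∀ w, ∑ x, pX w x = 1) (l : L) (k : K)
    (F : W → X → ℝ) :
    ∑ c : L → W × (K → X), bookP pW pX c * F (c l).1 ((c l).2 k)
      = ∑ w, pW w * ∑ x, pX w x * F w x := by
  rw [← cluster_one hX k F]
  exact sum_pi_one (clusterP pW pX) (cluster_sum hW hX) l (fun a => F a.1 (a.2 k))

lemma book_same (hW : ∑ w, pW w = 1) (hX : ∀ w, ∑ x, pX w x = 1) (l : L) (k k2 : K)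
    (hk : k2 ≠ k) (F : W → X → X → ℝ) :
    ∑ c : L → W × (K → X), bookP pW pX c * F (c l).1 ((c l).2 k) ((c l).2 k2)
      = ∑ w, pW w * ∑ x, pX w x * ∑ x2, pX w x2 * F w x x2 := by
  rw [← cluster_two hX k k2 hk F]
  exact sum_pi_one (clusterP pW pX) (cluster_sum hW hX) l (fun a => F a.1 (a.2 k) (a.2 k2))

lemma book_diff (hW : ∑ w, pW w = 1) (hX : ∀ w, ∑ x, pX w x = 1) (l l2 : L) (k k2 : K)
    (hl : l2 ≠ l) (F : W → X → W → X → ℝ) :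
    ∑ c : L → W × (K → X), bookP pW pX c * F (c l).1 ((c l).2 k) (c l2).1 ((c l2).2 k2)
      = ∑ w, pW w * ∑ x, pX w x * ∑ w2, pW w2 * ∑ x2, pX w2 x2 * F w x w2 x2 := by
  have h := sum_pi_two (clusterP pW pX) (cluster_sum (K := K) hW hX) l l2 hl
    (fun a b => F a.1 (a.2 k) b.1 (b.2 k2))
  refine h.trans ?_
  rw [← cluster_one hX k (fun w x => ∑ w2, pW w2 * ∑ x2, pX w2 x2 * F w x w2 x2)]
  refine Finset.sum_congr rfl fun a _ => ?_
  congr 1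
  exact cluster_one hX k2 (fun w2 x2 => F a.1 (a.2 k) w2 x2)

end Book

lemma wsum_pull {α β : Type*} [Fintype α] [Fintype β] (p : α → ℝ) (q : β → ℝ)
    (A : α → β → ℝ) (g : β → ℝ) :
    ∑ a, p a * ∑ b, q b * (A a b * g b) = ∑ b, q b * ((∑ a, p a * A a b) * g b) := by
  rw [wsum_comm]
  simp only [Finset.sum_mul, mul_assoc]

section OneShot
variable {W X K L U Z K' L' : Type*} [Fintype W] [Fintype X] [Fintype K] [Fintype L]
  [Fintype U] [Fintype Z] [Fintype K'] [Fintype L']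
  [DecidableEq K] [DecidableEq L] [DecidableEq K'] [DecidableEq L']
  {pW : W → ℝ} {pX : W → X → ℝ} {pU : U → ℝ} {pZ : U → Z → ℝ}

lemma book_other_same (hU : ∑ u, pU u = 1) (hZ : ∀ u, ∑ z, pZ u z = 1) (l' : L') (k' : K')
    (b : Z → ℝ) (g : U → ℝ) :
    ∑ c' : L' → U × (K' → Z), bookP pU pZ c' * (b ((c' l').2 k') * g (c' l').1)
      = ∑ u, pU u * ((∑ z, pZ u z * b z) * g u) := by
  rw [book_one hU hZ l' k' (fun u z => b z * g u)]
  simp only [Finset.sum_mul, mul_assoc]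

lemma book_other_diff (hU : ∑ u, pU u = 1) (hZ : ∀ u, ∑ z, pZ u z = 1) (l' l2 : L') (k' : K')
    (hl : l2 ≠ l') (b : Z → ℝ) (g : U → ℝ) :
    ∑ c' : L' → U × (K' → Z), bookP pU pZ c' * (b ((c' l').2 k') * g (c' l2).1)
      = ∑ u, pU u * ((∑ v, pU v * ∑ z, pZ v z * b z) * g u) := by
  rw [book_diff hU hZ l' l2 k' k' hl (fun u z u2 _ => b z * g u2)]
  simp only [wsum_const (hZ _)]
  rw [← wsum_pull]
  exact Finset.sum_congr rfl fun v _ => by rw [wsum_pull]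

lemma wsum_pull4 (P : U → X → ℝ) (g : W → U → X → ℝ) :
    ∑ w2, pW w2 * ∑ x2, pX w2 x2 * ∑ u, pU u *
        ((∑ w, pW w * ∑ x, pX w x * P u x) * g w2 u x2)
    = ∑ w, pW w * ∑ x, pX w x * ∑ w2, pW w2 * ∑ x2, pX w2 x2 * ∑ u, pU u *
        (P u x * g w2 u x2) := by
  have h : ∀ w2 x2, ∑ u, pU u * ((∑ w, pW w * ∑ x, pX w x * P u x) * g w2 u x2)
      = ∑ w, pW w * ∑ x, pX w x * ∑ u, pU u * (P u x * g w2 u x2) := by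
    intro w2 x2
    rw [← wsum_pull]
    exact Finset.sum_congr rfl fun w _ => by rw [wsum_pull]
  simp only [h]
  have h2 : ∀ w2, ∑ x2, pX w2 x2 * ∑ w, pW w * ∑ x, pX w x * ∑ u, pU u * (P u x * g w2 u x2)
      = ∑ w, pW w * ∑ x, pX w x * ∑ x2, pX w2 x2 * ∑ u, pU u * (P u x * g w2 u x2) := by
    intro w2
    rw [wsum_comm]
    exact Finset.sum_congr rfl fun w _ => by rw [wsum_comm]
  simp only [h2]
  rw [wsum_comm]
  exact Finset.sum_congr rfl fun w _ => by rw [wsum_comm]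

variable (hW : ∑ w, pW w = 1) (hX : ∀ w, ∑ x, pX w x = 1)
  (hU : ∑ u, pU u = 1) (hZ : ∀ u, ∑ z, pZ u z = 1)
include hW hX hU hZ
variable (ch : X → Z → ℝ) (g : W → U → X → ℝ) (l : L) (k : K) (l' : L') (k' : K')

/-- Averages over the two codebooks of the channel output probability under the messages `(l, k)`,
`(l', k')`, multiplied by a function `g` of codewords. Here `g` is evaluated at the transmitted
codewords. In the lemmas below it is evaluated at codewords of wrong messages, which are independent
of the output given the layers they share with the transmitted ones, so that the output probability
is averaged over all layers that differ. -/
lemma term_true :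
    ∑ c : L → W × (K → X), bookP pW pX c * ∑ c' : L' → U × (K' → Z), bookP pU pZ c' *
      (ch ((c l).2 k) ((c' l').2 k') * g (c l).1 (c' l').1 ((c l).2 k))
    = ∑ w, pW w * ∑ x, pX w x * ∑ u, pU u * ((∑ z, pZ u z * ch x z) * g w u x) := by
  rw [← book_one hW hX l k]
  exact Finset.sum_congr rfl fun c _ => by
    rw [book_other_same hU hZ l' k' (ch _) (fun u => g (c l).1 u ((c l).2 k))]

/-- Only the own private message is wrong. -/
lemma term_a (k2 : K) (hk : k2 ≠ k) :
    ∑ c : L → W × (K → X), bookP pW pX c * ∑ c' : L' → U × (K' → Z), bookP pU pZ c' *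
      (ch ((c l).2 k) ((c' l').2 k') * g (c l).1 (c' l').1 ((c l).2 k2))
    = ∑ w, pW w * ∑ x2, pX w x2 * ∑ u, pU u *
        ((∑ x, pX w x * ∑ z, pZ u z * ch x z) * g w u x2) := by
  have h1 : ∀ w, ∑ x2, pX w x2 * ∑ u, pU u * ((∑ x, pX w x * ∑ z, pZ u z * ch x z) * g w u x2)
      = ∑ x, pX w x * ∑ x2, pX w x2 * ∑ u, pU u * ((∑ z, pZ u z * ch x z) * g w u x2) := by
    intro w
    rw [wsum_comm (pX w) (pX w)]
    exact Finset.sum_congr rfl fun x2 _ => by rw [wsum_pull]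
  simp only [h1]
  rw [← book_same hW hX l k k2 hk
    (F := fun w x x2 => ∑ u, pU u * ((∑ z, pZ u z * ch x z) * g w u x2))]
  exact Finset.sum_congr rfl fun c _ => by
    rw [book_other_same hU hZ l' k' (ch _) (fun u => g (c l).1 u ((c l).2 k2))]

/-- The own private message and the interferer's common message are wrong. -/
lemma term_e (k2 : K) (hk : k2 ≠ k) (l2 : L') (hl : l2 ≠ l') :
    ∑ c : L → W × (K → X), bookP pW pX c * ∑ c' : L' → U × (K' → Z), bookP pU pZ c' *
      (ch ((c l).2 k) ((c' l').2 k') * g (c l).1 (c' l2).1 ((c l).2 k2))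
    = ∑ w, pW w * ∑ x2, pX w x2 * ∑ u, pU u *
        ((∑ x, pX w x * ∑ v, pU v * ∑ z, pZ v z * ch x z) * g w u x2) := by
  have h1 : ∀ w, ∑ x2, pX w x2 * ∑ u, pU u *
        ((∑ x, pX w x * ∑ v, pU v * ∑ z, pZ v z * ch x z) * g w u x2)
      = ∑ x, pX w x * ∑ x2, pX w x2 * ∑ u, pU u *
        ((∑ v, pU v * ∑ z, pZ v z * ch x z) * g w u x2) := by
    intro w
    rw [wsum_comm (pX w) (pX w)]
    exact Finset.sum_congr rfl fun x2 _ => by rw [wsum_pull]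
  simp only [h1]
  rw [← book_same hW hX l k k2 hk
    (F := fun w x x2 => ∑ u, pU u * ((∑ v, pU v * ∑ z, pZ v z * ch x z) * g w u x2))]
  exact Finset.sum_congr rfl fun c _ => by
    rw [book_other_diff hU hZ l' l2 k' hl (ch _) (fun u => g (c l).1 u ((c l).2 k2))]

/-- The own common message is wrong; every satellite of a wrong cloud is fresh, whether or not the
private index `k2` is the true one. -/
lemma term_d (l1 : L) (hl1 : l1 ≠ l) (k2 : K) :
    ∑ c : L → W × (K → X), bookP pW pX c * ∑ c' : L' → U × (K' → Z), bookP pU pZ c' *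
      (ch ((c l).2 k) ((c' l').2 k') * g (c l1).1 (c' l').1 ((c l1).2 k2))
    = ∑ w2, pW w2 * ∑ x2, pX w2 x2 * ∑ u, pU u *
        ((∑ w, pW w * ∑ x, pX w x * ∑ z, pZ u z * ch x z) * g w2 u x2) := by
  rw [wsum_pull4, ← book_diff hW hX l l1 k k2 hl1]
  exact Finset.sum_congr rfl fun c _ => by
    rw [book_other_same hU hZ l' k' (ch _) (fun u => g (c l1).1 u ((c l1).2 k2))]

/-- The own common message and the interferer's common message are wrong. -/
lemma term_g (l1 : L) (hl1 : l1 ≠ l) (k2 : K) (l2 : L') (hl : l2 ≠ l') :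
    ∑ c : L → W × (K → X), bookP pW pX c * ∑ c' : L' → U × (K' → Z), bookP pU pZ c' *
      (ch ((c l).2 k) ((c' l').2 k') * g (c l1).1 (c' l2).1 ((c l1).2 k2))
    = ∑ w2, pW w2 * ∑ x2, pX w2 x2 * ∑ u, pU u *
        ((∑ w, pW w * ∑ x, pX w x * ∑ v, pU v * ∑ z, pZ v z * ch x z) * g w2 u x2) := by
  rw [wsum_pull4 (P := fun _ x => ∑ v, pU v * ∑ z, pZ v z * ch x z),
    ← book_diff hW hX l l1 k k2 hl1]
  exact Finset.sum_congr rfl fun c _ => by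
    rw [book_other_diff hU hZ l' l2 k' hl (ch _) (fun u => g (c l1).1 u ((c l1).2 k2))]

end OneShot

/-! ### Union bound for one output letter -/

/-- Expectation of `Φ` under two independent variables with laws `p` and `q`. -/
noncomputable def dE {α β : Type*} [Fintype α] [Fintype β] (p : α → ℝ) (q : β → ℝ)
    (Φ : α → β → ℝ) : ℝ := ∑ a, p a * ∑ b, q b * Φ a b

section dE
variable {α β : Type*} [Fintype α] [Fintype β] {p : α → ℝ} {q : β → ℝ}

lemma dE_add (Φ Ψ : α → β → ℝ) : dE p q (fun a b => Φ a b + Ψ a b) = dE p q Φ + dE p q Ψ := by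
  simp only [dE, mul_add, Finset.sum_add_distrib]

lemma dE_sum {ι : Type*} (s : Finset ι) (Φ : ι → α → β → ℝ) :
    dE p q (fun a b => ∑ i ∈ s, Φ i a b) = ∑ i ∈ s, dE p q (Φ i) := by
  simp only [dE, Finset.mul_sum]
  symm
  rw [Finset.sum_comm]
  refine Finset.sum_congr rfl fun a _ => ?_
  rw [Finset.sum_comm]

lemma dE_mono (hp : ∀ a, 0 ≤ p a) (hq : ∀ a, 0 ≤ q a) {Φ Ψ : α → β → ℝ}
    (h : ∀ a b, Φ a b ≤ Ψ a b) : dE p q Φ ≤ dE p q Ψ :=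
  wsum_mono hp fun a => wsum_mono hq fun b => h a b

lemma dE_swap (Φ : α → β → ℝ) : dE p q Φ = dE q p (fun b a => Φ a b) := wsum_comm _ _ _

end dE

section OneShot
variable {W X K L U Z K' L' : Type*} [Fintype W] [Fintype X] [Fintype K] [Fintype L]
  [Fintype U] [Fintype Z] [Fintype K'] [Fintype L']
  [DecidableEq K] [DecidableEq L] [DecidableEq K'] [DecidableEq L']
  {pW : W → ℝ} {pX : W → X → ℝ} {pU : U → ℝ} {pZ : U → Z → ℝ}

/-- Change of measure: where the test `G` is passed, the likelihood `P` of the output given the layers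
shared with the transmitted codewords is at most `r` times the likelihood `V` given the tested ones. -/
lemma test_bound (hW : ∀ w, 0 ≤ pW w) (hX : ∀ w x, 0 ≤ pX w x) (hU : ∀ u, 0 ≤ pU u)
    (V : U → X → ℝ) (hV : ∀ u x, 0 ≤ V u x) (P : W → U → ℝ) (G : W → U → X → Prop)
    [∀ w u x, Decidable (G w u x)] (r : ℝ) (hr : 0 ≤ r)
    (h : ∀ w u x, G w u x → P w u ≤ V u x * r) :
    ∑ w, pW w * ∑ x, pX w x * ∑ u, pU u * (P w u * (if G w u x then 1 else 0))
      ≤ (∑ w, pW w * ∑ x, pX w x * ∑ u, pU u * V u x) * r := by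
  simp only [Finset.sum_mul, mul_assoc]
  refine wsum_mono hW fun w => wsum_mono (hX w) fun x => wsum_mono hU fun u => ?_
  split_ifs with hg
  · simpa using h w u x hg
  · simpa using mul_nonneg (hV u x) hr

/-- The error bound for a fixed output letter `y` and time-sharing value, with `ch x z = p(y|x,z)`: the
true codewords fail the test, or codewords of wrong own messages pass it. The four kinds of wrong
messages are those of `term_a`, `term_e`, `term_d` and `term_g`. -/
lemma one_shot_point
    (hWn : ∀ w, 0 ≤ pW w) (hXn : ∀ w x, 0 ≤ pX w x) (hUn : ∀ u, 0 ≤ pU u)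
    (hZn : ∀ u z, 0 ≤ pZ u z)
    (hW : ∑ w, pW w = 1) (hX : ∀ w, ∑ x, pX w x = 1)
    (hU : ∑ u, pU u = 1) (hZ : ∀ u, ∑ z, pZ u z = 1)
    (ch : X → Z → ℝ) (hch : ∀ x z, 0 ≤ ch x z) (G : W → U → X → Prop)
    [∀ w u x, Decidable (G w u x)] (ra re rd rg : ℝ)
    (hra : 0 ≤ ra) (hre : 0 ≤ re) (hrd : 0 ≤ rd) (hrg : 0 ≤ rg)
    (ha : ∀ w u x, G w u x →
      ∑ x, pX w x * ∑ z, pZ u z * ch x z ≤ (∑ z, pZ u z * ch x z) * ra)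
    (he : ∀ w u x, G w u x →
      ∑ x, pX w x * ∑ v, pU v * ∑ z, pZ v z * ch x z ≤ (∑ z, pZ u z * ch x z) * re)
    (hd : ∀ w u x, G w u x →
      ∑ w, pW w * ∑ x, pX w x * ∑ z, pZ u z * ch x z ≤ (∑ z, pZ u z * ch x z) * rd)
    (hg : ∀ w u x, G w u x →
      ∑ w, pW w * ∑ x, pX w x * ∑ v, pU v * ∑ z, pZ v z * ch x z
        ≤ (∑ z, pZ u z * ch x z) * rg)
    (l : L) (k : K) (l' : L') (k' : K')
    (err : (L → W × (K → X)) → (L' → U × (K' → Z)) → ℝ)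
    (herr1 : ∀ c c', err c c' ≤ 1)
    (herr : ∀ c c', G (c l).1 (c' l').1 ((c l).2 k) →
      (∀ l1 k1 l2, G (c l1).1 (c' l2).1 ((c l1).2 k1) → l1 = l ∧ k1 = k) → err c c' ≤ 0) :
    dE (bookP pW pX) (bookP pU pZ) (fun c c' => ch ((c l).2 k) ((c' l').2 k') * err c c')
    ≤ (∑ w, pW w * ∑ x, pX w x * ∑ u, pU u *
        ((∑ z, pZ u z * ch x z) * (if ¬ G w u x then 1 else 0)))
      + (∑ w, pW w * ∑ x, pX w x * ∑ u, pU u * ∑ z, pZ u z * ch x z) *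
        (((Fintype.card K - 1 : ℕ) : ℝ) * ra
          + ((Fintype.card K - 1 : ℕ) : ℝ) * Fintype.card L' * re
          + ((Fintype.card L - 1 : ℕ) : ℝ) * Fintype.card K * rd
          + ((Fintype.card L - 1 : ℕ) : ℝ) * Fintype.card K * Fintype.card L' * rg) := by
  set PG := ∑ w, pW w * ∑ x, pX w x * ∑ u, pU u * ∑ z, pZ u z * ch x z with hPG
  have hVn : ∀ u x, 0 ≤ ∑ z, pZ u z * ch x z := fun u x =>
    Finset.sum_nonneg fun z _ => mul_nonneg (hZn u z) (hch x z)
  have hPGn : 0 ≤ PG := Finset.sum_nonneg fun w _ => mul_nonneg (hWn w) <|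
    Finset.sum_nonneg fun x _ => mul_nonneg (hXn w x) <| Finset.sum_nonneg fun u _ =>
      mul_nonneg (hUn u) (hVn u x)
  -- the union bound, codebook by codebook
  have key : ∀ c c', ch ((c l).2 k) ((c' l').2 k') * err c c' ≤
      ch ((c l).2 k) ((c' l').2 k') * (if ¬ G (c l).1 (c' l').1 ((c l).2 k) then 1 else 0)
      + ∑ k2 ∈ Finset.univ.erase k, ch ((c l).2 k) ((c' l').2 k') *
          (if G (c l).1 (c' l').1 ((c l).2 k2) then 1 else 0)
      + ∑ k2 ∈ Finset.univ.erase k, ∑ l2 ∈ Finset.univ.erase l',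
          ch ((c l).2 k) ((c' l').2 k') * (if G (c l).1 (c' l2).1 ((c l).2 k2) then 1 else 0)
      + ∑ l1 ∈ Finset.univ.erase l, ∑ k2, ch ((c l).2 k) ((c' l').2 k') *
          (if G (c l1).1 (c' l').1 ((c l1).2 k2) then 1 else 0)
      + ∑ l1 ∈ Finset.univ.erase l, ∑ k2, ∑ l2 ∈ Finset.univ.erase l',
          ch ((c l).2 k) ((c' l').2 k') *
          (if G (c l1).1 (c' l2).1 ((c l1).2 k2) then 1 else 0) := by
    intro c c'
    simp only [← Finset.mul_sum, ← mul_add]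
    refine mul_le_mul_of_nonneg_left ?_ (hch _ _)
    have i01 : ∀ P : Prop, ∀ [Decidable P], (0 : ℝ) ≤ if P then 1 else 0 := by
      intro P _; split_ifs <;> norm_num
    have n0 := i01 (¬ G (c l).1 (c' l').1 ((c l).2 k))
    have na : 0 ≤ ∑ k2 ∈ Finset.univ.erase k,
        (if G (c l).1 (c' l').1 ((c l).2 k2) then (1 : ℝ) else 0) :=
      Finset.sum_nonneg fun _ _ => i01 _
    have ne : 0 ≤ ∑ k2 ∈ Finset.univ.erase k, ∑ l2 ∈ Finset.univ.erase l',
        (if G (c l).1 (c' l2).1 ((c l).2 k2) then (1 : ℝ) else 0) :=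
      Finset.sum_nonneg fun _ _ => Finset.sum_nonneg fun _ _ => i01 _
    have nd : 0 ≤ ∑ l1 ∈ Finset.univ.erase l, ∑ k2,
        (if G (c l1).1 (c' l').1 ((c l1).2 k2) then (1 : ℝ) else 0) :=
      Finset.sum_nonneg fun _ _ => Finset.sum_nonneg fun _ _ => i01 _
    have ng : 0 ≤ ∑ l1 ∈ Finset.univ.erase l, ∑ k2, ∑ l2 ∈ Finset.univ.erase l',
        (if G (c l1).1 (c' l2).1 ((c l1).2 k2) then (1 : ℝ) else 0) :=
      Finset.sum_nonneg fun _ _ => Finset.sum_nonneg fun _ _ => Finset.sum_nonneg fun _ _ => i01 _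
    by_cases h0 : G (c l).1 (c' l').1 ((c l).2 k)
    · by_cases h1 : ∀ l1 k1 l2, G (c l1).1 (c' l2).1 ((c l1).2 k1) → l1 = l ∧ k1 = k
      · linarith [herr c c' h0 h1]
      · push Not at h1
        obtain ⟨l1, k1, l2, hG, hne⟩ := h1
        have h1 := herr1 c c'
        by_cases hl1 : l1 = l
        · subst hl1
          have hk1 : k1 ∈ Finset.univ.erase k := by simpa using hne rfl
          by_cases hl2 : l2 = l'
          · subst hl2
            have := Finset.single_le_sum (f := fun k2 =>
              if G (c l1).1 (c' l2).1 ((c l1).2 k2) then (1 : ℝ) else 0)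
              (fun _ _ => i01 _) hk1
            simp only [hG, if_true] at this
            linarith
          · have hl2' : l2 ∈ Finset.univ.erase l' := by simpa using hl2
            have := Finset.single_le_sum (f := fun k2 => ∑ l2 ∈ Finset.univ.erase l',
              if G (c l1).1 (c' l2).1 ((c l1).2 k2) then (1 : ℝ) else 0)
              (fun _ _ => Finset.sum_nonneg fun _ _ => i01 _) hk1
            have h2 := Finset.single_le_sum (f := fun l2 =>
              if G (c l1).1 (c' l2).1 ((c l1).2 k1) then (1 : ℝ) else 0)
              (fun _ _ => i01 _) hl2'
            simp only [hG, if_true] at this h2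
            linarith
        · have hl1' : l1 ∈ Finset.univ.erase l := by simpa using hl1
          by_cases hl2 : l2 = l'
          · subst hl2
            have := Finset.single_le_sum (f := fun l1 => ∑ k2,
              if G (c l1).1 (c' l2).1 ((c l1).2 k2) then (1 : ℝ) else 0)
              (fun _ _ => Finset.sum_nonneg fun _ _ => i01 _) hl1'
            have h2 := Finset.single_le_sum (f := fun k2 =>
              if G (c l1).1 (c' l2).1 ((c l1).2 k2) then (1 : ℝ) else 0)
              (fun _ _ => i01 _) (Finset.mem_univ k1)
            simp only [hG, if_true] at this h2
            linarith
          · have hl2' : l2 ∈ Finset.univ.erase l' := by simpa using hl2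
            have := Finset.single_le_sum (f := fun l1 => ∑ k2, ∑ l2 ∈ Finset.univ.erase l',
              if G (c l1).1 (c' l2).1 ((c l1).2 k2) then (1 : ℝ) else 0)
              (fun _ _ => Finset.sum_nonneg fun _ _ => Finset.sum_nonneg fun _ _ => i01 _) hl1'
            have h2 := Finset.single_le_sum (f := fun k2 => ∑ l2 ∈ Finset.univ.erase l',
              if G (c l1).1 (c' l2).1 ((c l1).2 k2) then (1 : ℝ) else 0)
              (fun _ _ => Finset.sum_nonneg fun _ _ => i01 _) (Finset.mem_univ k1)
            have h3 := Finset.single_le_sum (f := fun l2 =>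
              if G (c l1).1 (c' l2).1 ((c l1).2 k1) then (1 : ℝ) else 0)
              (fun _ _ => i01 _) hl2'
            simp only [hG, if_true] at this h2 h3
            linarith
    · have h1 := herr1 c c'
      rw [if_pos h0]
      linarith
  refine (dE_mono (bookP_nonneg hWn hXn) (bookP_nonneg hUn hZn) key).trans ?_
  simp only [dE_add, dE_sum]
  have e0 := term_true hW hX hU hZ ch (fun w u x => if ¬ G w u x then (1 : ℝ) else 0) l k l' k'
  have ca : ∑ k2 ∈ Finset.univ.erase k, dE (bookP pW pX) (bookP pU pZ)
      (fun c c' => ch ((c l).2 k) ((c' l').2 k') *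
          (if G (c l).1 (c' l').1 ((c l).2 k2) then 1 else 0))
      ≤ ((Fintype.card K - 1 : ℕ) : ℝ) * (PG * ra) := by
    rw [← Finset.card_univ, ← Finset.card_erase_of_mem (Finset.mem_univ k), ← nsmul_eq_mul]
    refine Finset.sum_le_card_nsmul _ _ _ fun k2 hk2 => ?_
    have e := term_a hW hX hU hZ ch (fun w u x => if G w u x then (1 : ℝ) else 0) l k l' k' k2
      (Finset.ne_of_mem_erase hk2)
    exact e.le.trans (test_bound hWn hXn hUn _ hVn _ G ra hra ha)
  have ce : ∑ k2 ∈ Finset.univ.erase k, ∑ l2 ∈ Finset.univ.erase l',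
      dE (bookP pW pX) (bookP pU pZ) (fun c c' => ch ((c l).2 k) ((c' l').2 k') *
          (if G (c l).1 (c' l2).1 ((c l).2 k2) then 1 else 0))
      ≤ ((Fintype.card K - 1 : ℕ) : ℝ) * (Fintype.card L' * (PG * re)) := by
    rw [← Finset.card_univ, ← Finset.card_erase_of_mem (Finset.mem_univ k), ← nsmul_eq_mul]
    refine Finset.sum_le_card_nsmul _ _ _ fun k2 hk2 => ?_
    refine (Finset.sum_le_card_nsmul _ _ (PG * re) fun l2 hl2 => ?_).trans ?_
    · have e := term_e hW hX hU hZ ch (fun w u x => if G w u x then (1 : ℝ) else 0) l k l' k' k2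
        (Finset.ne_of_mem_erase hk2) l2 (Finset.ne_of_mem_erase hl2)
      exact e.le.trans (test_bound hWn hXn hUn _ hVn
        (fun w _ => ∑ x, pX w x * ∑ v, pU v * ∑ z, pZ v z * ch x z) G re hre he)
    · rw [nsmul_eq_mul]
      refine mul_le_mul_of_nonneg_right ?_ (mul_nonneg hPGn hre)
      exact_mod_cast Finset.card_le_univ _
  have cd : ∑ l1 ∈ Finset.univ.erase l, ∑ k2, dE (bookP pW pX) (bookP pU pZ)
      (fun c c' => ch ((c l).2 k) ((c' l').2 k') *
          (if G (c l1).1 (c' l').1 ((c l1).2 k2) then 1 else 0))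
      ≤ ((Fintype.card L - 1 : ℕ) : ℝ) * (Fintype.card K * (PG * rd)) := by
    rw [← Finset.card_univ, ← Finset.card_univ,
      ← Finset.card_erase_of_mem (Finset.mem_univ l), ← nsmul_eq_mul, ← nsmul_eq_mul]
    refine Finset.sum_le_card_nsmul _ _ _ fun l1 hl1 => ?_
    refine Finset.sum_le_card_nsmul _ _ _ fun k2 _ => ?_
    have e := term_d hW hX hU hZ ch (fun w u x => if G w u x then (1 : ℝ) else 0) l k l' k' l1
      (Finset.ne_of_mem_erase hl1) k2
    exact e.le.trans (test_bound hWn hXn hUn _ hVn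
      (fun _ u => ∑ w, pW w * ∑ x, pX w x * ∑ z, pZ u z * ch x z) G rd hrd hd)
  have cg : ∑ l1 ∈ Finset.univ.erase l, ∑ k2, ∑ l2 ∈ Finset.univ.erase l',
      dE (bookP pW pX) (bookP pU pZ) (fun c c' => ch ((c l).2 k) ((c' l').2 k') *
          (if G (c l1).1 (c' l2).1 ((c l1).2 k2) then 1 else 0))
      ≤ ((Fintype.card L - 1 : ℕ) : ℝ) * (Fintype.card K * (Fintype.card L' * (PG * rg))) := by
    rw [← Finset.card_univ, ← Finset.card_univ (α := K),
      ← Finset.card_erase_of_mem (Finset.mem_univ l), ← nsmul_eq_mul, ← nsmul_eq_mul]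
    refine Finset.sum_le_card_nsmul _ _ _ fun l1 hl1 => ?_
    refine Finset.sum_le_card_nsmul _ _ _ fun k2 _ => ?_
    refine (Finset.sum_le_card_nsmul _ _ (PG * rg) fun l2 hl2 => ?_).trans ?_
    · have e := term_g hW hX hU hZ ch (fun w u x => if G w u x then (1 : ℝ) else 0) l k l' k' l1
        (Finset.ne_of_mem_erase hl1) k2 l2 (Finset.ne_of_mem_erase hl2)
      exact e.le.trans (test_bound hWn hXn hUn _ hVn
        (fun _ _ => ∑ w, pW w * ∑ x, pX w x * ∑ v, pU v * ∑ z, pZ v z * ch x z) G rg hrg hg)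
    · rw [nsmul_eq_mul]
      refine mul_le_mul_of_nonneg_right ?_ (mul_nonneg hPGn hrg)
      exact_mod_cast Finset.card_le_univ _
  have e0' : dE (bookP pW pX) (bookP pU pZ) (fun c c' => ch ((c l).2 k) ((c' l').2 k') *
      (if ¬ G (c l).1 (c' l').1 ((c l).2 k) then 1 else 0)) = _ := e0
  rw [e0']
  linarith [ca, ce, cd, cg]

end OneShot

/-! ### The channel seen by one receiver -/

/-- The data relevant to one receiver: the time-sharing variable `Q`, the cloud `W` and input `X` of
its own user, the cloud `U` and input `Z` of the interferer, and the channel `ch x z y = p(y|x,z)`. -/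
structure Link (Q W U X Z Y : Type*) [Fintype Q] [Fintype W] [Fintype U] [Fintype X]
    [Fintype Z] [Fintype Y] where
  pQ : Q → ℝ
  pW : Q → W → ℝ
  pU : Q → U → ℝ
  pX : W → Q → X → ℝ
  pZ : U → Q → Z → ℝ
  ch : X → Z → Y → ℝ
  pQ_nn : ∀ q, 0 ≤ pQ q
  pQ_sum : ∑ q, pQ q = 1
  pW_nn : ∀ q w, 0 ≤ pW q w
  pW_sum : ∀ q, ∑ w, pW q w = 1
  pU_nn : ∀ q u, 0 ≤ pU q u
  pU_sum : ∀ q, ∑ u, pU q u = 1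
  pX_nn : ∀ w q x, 0 ≤ pX w q x
  pX_sum : ∀ w q, ∑ x, pX w q x = 1
  pZ_nn : ∀ u q z, 0 ≤ pZ u q z
  pZ_sum : ∀ u q, ∑ z, pZ u q z = 1
  ch_nn : ∀ x z y, 0 ≤ ch x z y
  ch_sum : ∀ x z, ∑ y, ch x z y = 1

namespace Link
variable {Q W U X Z Y : Type*} [Fintype Q] [Fintype W] [Fintype U] [Fintype X]
    [Fintype Z] [Fintype Y] (D : Link Q W U X Z Y)

/-- `p(y|q,u,x)`: the input of the interferer is averaged out given its cloud. -/
noncomputable def V (q : Q) (u : U) (x : X) (y : Y) : ℝ := ∑ z, D.pZ u q z * D.ch x z y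
/-- `p(y|q,w,u)` -/
noncomputable def Pa (q : Q) (w : W) (u : U) (y : Y) : ℝ := ∑ x, D.pX w q x * D.V q u x y
/-- `p(y|q,u)` -/
noncomputable def Pd (q : Q) (u : U) (y : Y) : ℝ := ∑ w, D.pW q w * D.Pa q w u y
/-- `p(y|q,w)` -/
noncomputable def Pe (q : Q) (w : W) (y : Y) : ℝ :=
  ∑ x, D.pX w q x * ∑ u, D.pU q u * D.V q u x y
/-- `p(y|q)` -/
noncomputable def Pg (q : Q) (y : Y) : ℝ := ∑ w, D.pW q w * D.Pe q w y

/-- The joint law of `(Q, Y, W, X, U)`. -/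
noncomputable def joint (ω : Q × Y × W × X × U) : ℝ :=
  D.pQ ω.1 * (D.pW ω.1 ω.2.2.1 * (D.pX ω.2.2.1 ω.1 ω.2.2.2.1 *
    (D.pU ω.1 ω.2.2.2.2 * D.V ω.1 ω.2.2.2.2 ω.2.2.2.1 ω.2.1)))

/-- The expectation of `log₂ (p(Y|Q,U,X) / P)`, which is a conditional mutual information when `P` is
the law of `Y` given part of `(Q, W, U)`. -/
noncomputable def J (P : Q → W → U → Y → ℝ) : ℝ :=
  ∑ ω : Q × Y × W × X × U, D.joint ω * Real.logb 2
    (D.V ω.1 ω.2.2.2.2 ω.2.2.2.1 ω.2.1 / P ω.1 ω.2.2.1 ω.2.2.2.2 ω.2.1)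

/-- `I(X;Y|Q,W,U)` -/
noncomputable def Ja : ℝ := D.J (fun q w u y => D.Pa q w u y)
/-- `I(X;Y|Q,U)` -/
noncomputable def Jd : ℝ := D.J (fun q _ u y => D.Pd q u y)
/-- `I(U,X;Y|Q,W)` -/
noncomputable def Je : ℝ := D.J (fun q w _ y => D.Pe q w y)
/-- `I(U,X;Y|Q)` -/
noncomputable def Jg : ℝ := D.J (fun q _ _ y => D.Pg q y)

lemma V_nn (q u x y) : 0 ≤ D.V q u x y :=
  Finset.sum_nonneg fun _ _ => mul_nonneg (D.pZ_nn _ _ _) (D.ch_nn _ _ _)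
lemma Pa_nn (q w u y) : 0 ≤ D.Pa q w u y :=
  Finset.sum_nonneg fun _ _ => mul_nonneg (D.pX_nn _ _ _) (D.V_nn _ _ _ _)
lemma Pe_nn (q w y) : 0 ≤ D.Pe q w y :=
  Finset.sum_nonneg fun _ _ => mul_nonneg (D.pX_nn _ _ _) <|
    Finset.sum_nonneg fun _ _ => mul_nonneg (D.pU_nn _ _) (D.V_nn _ _ _ _)

lemma V_sum (q u x) : ∑ y, D.V q u x y = 1 := by
  unfold V
  rw [Finset.sum_comm]
  simp only [← Finset.mul_sum, D.ch_sum, mul_one, D.pZ_sum]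

lemma joint_nn (ω) : 0 ≤ D.joint ω :=
  mul_nonneg (D.pQ_nn _) <| mul_nonneg (D.pW_nn _ _) <| mul_nonneg (D.pX_nn _ _ _) <|
    mul_nonneg (D.pU_nn _ _) (D.V_nn _ _ _ _)

lemma sum_joint_mul (F : Q × Y × W × X × U → ℝ) :
    ∑ ω, D.joint ω * F ω = ∑ q, D.pQ q * ∑ y, ∑ w, D.pW q w * ∑ x, D.pX w q x *
      ∑ u, D.pU q u * (D.V q u x y * F (q, y, w, x, u)) := by
  simp only [Fintype.sum_prod_type, joint, Finset.mul_sum, mul_assoc]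

lemma sum_y_Pg (q) : ∑ y, D.Pg q y = 1 := by
  unfold Pg Pe
  rw [Finset.sum_comm]
  simp only [← Finset.mul_sum]
  have : ∀ w, ∑ y, ∑ x, D.pX w q x * ∑ u, D.pU q u * D.V q u x y = 1 := by
    intro w
    rw [Finset.sum_comm]
    simp only [← Finset.mul_sum]
    have : ∀ x, ∑ y, ∑ u, D.pU q u * D.V q u x y = 1 := by
      intro x
      rw [Finset.sum_comm]
      simp only [← Finset.mul_sum, D.V_sum, mul_one, D.pU_sum]
    simp only [this, mul_one, D.pX_sum]
  simp only [this, mul_one, D.pW_sum]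

lemma joint_sum : ∑ ω, D.joint ω = 1 := by
  have h := D.sum_joint_mul (fun _ => 1)
  simp only [mul_one] at h
  rw [h, ← D.pQ_sum]
  refine Finset.sum_congr rfl fun q _ => ?_
  rw [show ∑ y, ∑ w, D.pW q w * ∑ x, D.pX w q x * ∑ u, D.pU q u * D.V q u x y = 1 from
    D.sum_y_Pg q, mul_one]

lemma pos_of_joint_pos (ω : Q × Y × W × X × U) (h : 0 < D.joint ω) :
    0 < D.V ω.1 ω.2.2.2.2 ω.2.2.2.1 ω.2.1 ∧ 0 < D.Pa ω.1 ω.2.2.1 ω.2.2.2.2 ω.2.1 ∧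
    0 < D.Pd ω.1 ω.2.2.2.2 ω.2.1 ∧ 0 < D.Pe ω.1 ω.2.2.1 ω.2.1 ∧ 0 < D.Pg ω.1 ω.2.1 := by
  obtain ⟨q, y, w, x, u⟩ := ω
  simp only [joint] at h ⊢
  have e1 := pos_of_mul_pos_right h (D.pQ_nn q)
  have hw : 0 < D.pW q w := pos_of_mul_pos_left e1 (mul_nonneg (D.pX_nn _ _ _) <|
    mul_nonneg (D.pU_nn _ _) (D.V_nn _ _ _ _))
  have e2 := pos_of_mul_pos_right e1 (D.pW_nn q w)
  have hx : 0 < D.pX w q x := pos_of_mul_pos_left e2 (mul_nonneg (D.pU_nn _ _) (D.V_nn _ _ _ _))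
  have e3 := pos_of_mul_pos_right e2 (D.pX_nn w q x)
  have hu : 0 < D.pU q u := pos_of_mul_pos_left e3 (D.V_nn _ _ _ _)
  have hV := pos_of_mul_pos_right e3 (D.pU_nn q u)
  have hPa : 0 < D.Pa q w u y := Finset.sum_pos'
    (fun _ _ => mul_nonneg (D.pX_nn _ _ _) (D.V_nn _ _ _ _)) ⟨x, Finset.mem_univ _, mul_pos hx hV⟩
  have hPe : 0 < D.Pe q w y := Finset.sum_pos'
    (fun _ _ => mul_nonneg (D.pX_nn _ _ _) <|
      Finset.sum_nonneg fun _ _ => mul_nonneg (D.pU_nn _ _) (D.V_nn _ _ _ _))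
    ⟨x, Finset.mem_univ _, mul_pos hx <| Finset.sum_pos'
      (fun _ _ => mul_nonneg (D.pU_nn _ _) (D.V_nn _ _ _ _)) ⟨u, Finset.mem_univ _, mul_pos hu hV⟩⟩
  exact ⟨hV, hPa, Finset.sum_pos' (fun _ _ => mul_nonneg (D.pW_nn _ _) (D.Pa_nn _ _ _ _))
    ⟨w, Finset.mem_univ _, mul_pos hw hPa⟩, hPe,
    Finset.sum_pos' (fun _ _ => mul_nonneg (D.pW_nn _ _) (D.Pe_nn _ _ _))
    ⟨w, Finset.mem_univ _, mul_pos hw hPe⟩⟩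

/-- The likelihood-ratio tests of the decoder, one for each kind of wrong messages. -/
def Test (ta td te tg : ℝ) (q : Q) (y : Y) (w : W) (u : U) (x : X) : Prop :=
  ta * D.Pa q w u y ≤ D.V q u x y ∧ td * D.Pd q u y ≤ D.V q u x y ∧
  te * D.Pe q w y ≤ D.V q u x y ∧ tg * D.Pg q y ≤ D.V q u x y

open Classical in
/-- The decoder: it returns an own message pair that passes the test together with some common message
of the interferer, and an arbitrary pair if there is none. -/
noncomputable def dec {K L K' L' : Type*} [Nonempty K] [Nonempty L]
    (G : Y → W → U → X → Prop) (c : L → W × (K → X)) (c' : L' → U × (K' → Z)) (y : Y) : L × K :=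
  if h : ∃ m : L × K, ∃ l', G y (c m.1).1 (c' l').1 ((c m.1).2 m.2) then h.choose
  else Classical.arbitrary _

open Classical in
/-- The average error of the decoder over random codebooks, for any fixed messages. -/
lemma one_shot {K L K' L' : Type*} [Fintype K] [Fintype L] [Fintype K'] [Fintype L']
    [DecidableEq K] [DecidableEq L] [DecidableEq K'] [DecidableEq L'] [Nonempty K] [Nonempty L]
    (ta td te tg : ℝ) (hta : 0 < ta) (htd : 0 < td) (hte : 0 < te) (htg : 0 < tg)
    (l : L) (k : K) (l' : L') (k' : K') :
    ∑ q, D.pQ q * dE (bookP (D.pW q) (fun w => D.pX w q)) (bookP (D.pU q) (fun u => D.pZ u q))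
      (fun c c' => ∑ y, D.ch ((c l).2 k) ((c' l').2 k') y *
        (if dec (D.Test ta td te tg q) c c' y ≠ (l, k) then 1 else 0))
    ≤ (∑ ω, D.joint ω * (if ¬ D.Test ta td te tg ω.1 ω.2.1 ω.2.2.1 ω.2.2.2.2 ω.2.2.2.1
        then 1 else 0))
      + (((Fintype.card K - 1 : ℕ) : ℝ) * ta⁻¹
          + ((Fintype.card K - 1 : ℕ) : ℝ) * Fintype.card L' * te⁻¹
          + ((Fintype.card L - 1 : ℕ) : ℝ) * Fintype.card K * td⁻¹
          + ((Fintype.card L - 1 : ℕ) : ℝ) * Fintype.card K * Fintype.card L' * tg⁻¹) := by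
  set B := (((Fintype.card K - 1 : ℕ) : ℝ) * ta⁻¹
          + ((Fintype.card K - 1 : ℕ) : ℝ) * Fintype.card L' * te⁻¹
          + ((Fintype.card L - 1 : ℕ) : ℝ) * Fintype.card K * td⁻¹
          + ((Fintype.card L - 1 : ℕ) : ℝ) * Fintype.card K * Fintype.card L' * tg⁻¹) with hB
  rw [sum_joint_mul]
  have hBq : B = ∑ q, D.pQ q * ∑ y, D.Pg q y * B := by
    simp only [← Finset.sum_mul, D.sum_y_Pg, one_mul, D.pQ_sum]
  conv_rhs => rw [hBq]
  rw [← Finset.sum_add_distrib]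
  simp only [← mul_add, ← Finset.sum_add_distrib]
  refine wsum_mono D.pQ_nn fun q => ?_
  rw [dE_sum]
  refine Finset.sum_le_sum fun y _ => ?_
  refine one_shot_point (D.pW_nn q) (fun w x => D.pX_nn w q x) (D.pU_nn q)
    (fun u z => D.pZ_nn u q z) (D.pW_sum q) (fun w => D.pX_sum w q) (D.pU_sum q)
    (fun u => D.pZ_sum u q) (fun x z => D.ch x z y) (fun x z => D.ch_nn x z y)
    (D.Test ta td te tg q y) ta⁻¹ te⁻¹ td⁻¹ tg⁻¹
    (inv_pos.2 hta).le (inv_pos.2 hte).le (inv_pos.2 htd).le (inv_pos.2 htg).le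
    ?_ ?_ ?_ ?_ l k l' k' _ ?_ ?_
  · intro w u x h
    rw [← div_eq_mul_inv, le_div_iff₀ hta, mul_comm]
    exact h.1
  · intro w u x h
    rw [← div_eq_mul_inv, le_div_iff₀ hte, mul_comm]
    exact h.2.2.1
  · intro w u x h
    rw [← div_eq_mul_inv, le_div_iff₀ htd, mul_comm]
    exact h.2.1
  · intro w u x h
    rw [← div_eq_mul_inv, le_div_iff₀ htg, mul_comm]
    exact h.2.2.2
  · intro c c'
    split_ifs <;> norm_num
  · intro c c' h0 h1
    have hex : ∃ m : L × K, ∃ l', D.Test ta td te tg q y (c m.1).1 (c' l').1 ((c m.1).2 m.2) :=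
      ⟨(l, k), l', h0⟩
    rw [if_neg]
    rw [not_not]
    simp only [dec, dif_pos hex]
    obtain ⟨l2, h2⟩ := hex.choose_spec
    exact Prod.ext (h1 _ _ _ h2).1 (h1 _ _ _ h2).2

/-- The memoryless `n`-fold extension. -/
noncomputable def block (n : ℕ) : Link (Fin n → Q) (Fin n → W) (Fin n → U) (Fin n → X)
    (Fin n → Z) (Fin n → Y) where
  pQ q := ∏ i, D.pQ (q i)
  pW q w := ∏ i, D.pW (q i) (w i)
  pU q u := ∏ i, D.pU (q i) (u i)
  pX w q x := ∏ i, D.pX (w i) (q i) (x i)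
  pZ u q z := ∏ i, D.pZ (u i) (q i) (z i)
  ch x z y := ∏ i, D.ch (x i) (z i) (y i)
  pQ_nn _ := Finset.prod_nonneg fun _ _ => D.pQ_nn _
  pQ_sum := by rw [sum_pi_prod (fun _ => D.pQ)]; simp [D.pQ_sum]
  pW_nn _ _ := Finset.prod_nonneg fun _ _ => D.pW_nn _ _
  pW_sum q := by rw [sum_pi_prod (fun i => D.pW (q i))]; simp [D.pW_sum]
  pU_nn _ _ := Finset.prod_nonneg fun _ _ => D.pU_nn _ _
  pU_sum q := by rw [sum_pi_prod (fun i => D.pU (q i))]; simp [D.pU_sum]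
  pX_nn _ _ _ := Finset.prod_nonneg fun _ _ => D.pX_nn _ _ _
  pX_sum w q := by rw [sum_pi_prod (fun i => D.pX (w i) (q i))]; simp [D.pX_sum]
  pZ_nn _ _ _ := Finset.prod_nonneg fun _ _ => D.pZ_nn _ _ _
  pZ_sum u q := by rw [sum_pi_prod (fun i => D.pZ (u i) (q i))]; simp [D.pZ_sum]
  ch_nn _ _ _ := Finset.prod_nonneg fun _ _ => D.ch_nn _ _ _
  ch_sum x z := by rw [sum_pi_prod (fun i => D.ch (x i) (z i))]; simp [D.ch_sum]

lemma prod_wsum {ι α : Type*} [Fintype ι] [DecidableEq ι] [Fintype α] (p F : ι → α → ℝ) :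
    ∑ x : ι → α, (∏ i, p i (x i)) * ∏ i, F i (x i) = ∏ i, ∑ a, p i a * F i a := by
  simp only [← Finset.prod_mul_distrib]
  exact sum_pi_prod (fun i a => p i a * F i a)

variable (n : ℕ)

lemma block_V (q u x y) : (D.block n).V q u x y = ∏ i, D.V (q i) (u i) (x i) (y i) :=
  prod_wsum (fun i z => D.pZ (u i) (q i) z) (fun i z => D.ch (x i) z (y i))

lemma block_Pa (q w u y) : (D.block n).Pa q w u y = ∏ i, D.Pa (q i) (w i) (u i) (y i) := by
  unfold Pa
  simp only [block_V]
  exact prod_wsum (fun i x => D.pX (w i) (q i) x) (fun i x => D.V (q i) (u i) x (y i))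

lemma block_Pd (q u y) : (D.block n).Pd q u y = ∏ i, D.Pd (q i) (u i) (y i) := by
  unfold Pd
  simp only [block_Pa]
  exact prod_wsum (fun i w => D.pW (q i) w) (fun i w => D.Pa (q i) w (u i) (y i))

lemma block_Pe (q w y) : (D.block n).Pe q w y = ∏ i, D.Pe (q i) (w i) (y i) := by
  unfold Pe
  simp only [block_V]
  have : ∀ x : Fin n → X, ∑ u, (D.block n).pU q u * ∏ i, D.V (q i) (u i) (x i) (y i)
      = ∏ i, ∑ u, D.pU (q i) u * D.V (q i) u (x i) (y i) := fun x =>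
    prod_wsum (fun i u => D.pU (q i) u) (fun i u => D.V (q i) u (x i) (y i))
  simp only [this]
  exact prod_wsum (fun i x => D.pX (w i) (q i) x)
    (fun i x => ∑ u, D.pU (q i) u * D.V (q i) u x (y i))

lemma block_Pg (q y) : (D.block n).Pg q y = ∏ i, D.Pg (q i) (y i) := by
  unfold Pg
  simp only [block_Pe]
  exact prod_wsum (fun i w => D.pW (q i) w) (fun i w => D.Pe (q i) w (y i))

/-- The joint law of the extension is the product law, up to regrouping the coordinates. -/
lemma block_joint_sum (F : (Fin n → Q) × (Fin n → Y) × (Fin n → W) × (Fin n → X) × (Fin n → U) → ℝ) :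
    ∑ ω, (D.block n).joint ω * F ω = ∑ ω : Fin n → Q × Y × W × X × U, (∏ i, D.joint (ω i)) *
      F (fun i => (ω i).1, fun i => (ω i).2.1, fun i => (ω i).2.2.1, fun i => (ω i).2.2.2.1,
        fun i => (ω i).2.2.2.2) := by
  have h : ∀ ω : Fin n → Q × Y × W × X × U, ∏ i, D.joint (ω i) = (D.block n).joint
      (fun i => (ω i).1, fun i => (ω i).2.1, fun i => (ω i).2.2.1, fun i => (ω i).2.2.2.1,
        fun i => (ω i).2.2.2.2) := by
    intro ω
    simp only [joint, block_V, Finset.prod_mul_distrib]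
    rfl
  simp only [h]
  symm
  rw [Fintype.sum_prod_type]
  refine (sum_arrow_prod (fun (a : Fin n → Q) (b : Fin n → Y × W × X × U) =>
    (D.block n).joint (a, fun i => (b i).1, fun i => (b i).2.1, fun i => (b i).2.2.1,
      fun i => (b i).2.2.2) * F (a, fun i => (b i).1, fun i => (b i).2.1, fun i => (b i).2.2.1,
      fun i => (b i).2.2.2))).trans ?_
  refine Finset.sum_congr rfl fun a _ => ?_
  rw [Fintype.sum_prod_type]
  refine (sum_arrow_prod (fun (a2 : Fin n → Y) (b : Fin n → W × X × U) =>
    (D.block n).joint (a, a2, fun i => (b i).1, fun i => (b i).2.1, fun i => (b i).2.2)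
      * F (a, a2, fun i => (b i).1, fun i => (b i).2.1, fun i => (b i).2.2))).trans ?_
  refine Finset.sum_congr rfl fun a2 _ => ?_
  rw [Fintype.sum_prod_type]
  refine (sum_arrow_prod (fun (a3 : Fin n → W) (b : Fin n → X × U) =>
    (D.block n).joint (a, a2, a3, fun i => (b i).1, fun i => (b i).2)
      * F (a, a2, a3, fun i => (b i).1, fun i => (b i).2))).trans ?_
  refine Finset.sum_congr rfl fun a3 _ => ?_
  rw [Fintype.sum_prod_type]
  exact sum_arrow_prod (fun (a4 : Fin n → X) (b : Fin n → U) =>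
    (D.block n).joint (a, a2, a3, a4, b) * F (a, a2, a3, a4, b))

end Link

/-! ### Asymptotics of one receiver -/

/-- Number of messages at rate `r`. It equals one at `r = 0`, so a layer of rate zero has no wrong
messages. -/
noncomputable def msz (n : ℕ) (r : ℝ) : ℕ := ⌈(2 : ℝ) ^ (n * r)⌉₊

lemma msz_pos (n : ℕ) (r : ℝ) : 0 < msz n r := Nat.ceil_pos.2 (by positivity)

instance (n : ℕ) (r : ℝ) : Nonempty (Fin (msz n r)) := ⟨⟨0, msz_pos n r⟩⟩

lemma msz_zero (n : ℕ) : msz n 0 = 1 := by simp [msz]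

lemma le_msz (n : ℕ) (r : ℝ) : (2 : ℝ) ^ (n * r) ≤ msz n r := Nat.le_ceil _

lemma msz_sub_one_le (n : ℕ) (r : ℝ) : ((msz n r - 1 : ℕ) : ℝ) ≤ 2 ^ (n * r) := by
  have h := Nat.ceil_lt_add_one (a := (2 : ℝ) ^ (n * r)) (by positivity)
  rw [Nat.cast_sub (msz_pos n r)]
  simp only [msz, Nat.cast_one]
  linarith

lemma msz_le (n : ℕ) {r : ℝ} (hr : 0 ≤ r) : (msz n r : ℝ) ≤ 2 * 2 ^ (n * r) := by
  have h := Nat.ceil_lt_add_one (a := (2 : ℝ) ^ (n * r)) (by positivity)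
  have h1 : (1 : ℝ) ≤ 2 ^ (n * r) := Real.one_le_rpow (by norm_num) (by positivity)
  simp only [msz]
  linarith

/-- The number of wrong messages times the probability that one of them passes a test at level `A`. -/
lemma count_tendsto {k c A C : ℝ} (h : k = 0 ∨ k + c < A)
    (m : ℕ → ℝ) (hm0 : ∀ n, 0 ≤ m n) (hm : ∀ n : ℕ, m n ≤ C * 2 ^ (n * c)) :
    Filter.Tendsto (fun n : ℕ => ((msz n k - 1 : ℕ) : ℝ) * m n * ((2 : ℝ) ^ (n * A))⁻¹)
      Filter.atTop (nhds 0) := by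
  rcases h with rfl | h
  · simp [msz_zero]
  have hC : Filter.Tendsto (fun n : ℕ => C * ((2 : ℝ) ^ (k + c - A)) ^ n)
      Filter.atTop (nhds 0) := by
    rw [← mul_zero C]
    exact (tendsto_pow_atTop_nhds_zero_of_lt_one (by positivity)
      (Real.rpow_lt_one_of_one_lt_of_neg (by norm_num) (by linarith))).const_mul C
  refine squeeze_zero (fun n => mul_nonneg (mul_nonneg (Nat.cast_nonneg _) (hm0 n))
    (by positivity)) (fun n => ?_) hC
  calc _ ≤ (2 : ℝ) ^ (n * k) * (C * 2 ^ (n * c)) * ((2 : ℝ) ^ (n * A))⁻¹ := by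
        refine mul_le_mul_of_nonneg_right ?_ (by positivity)
        exact mul_le_mul (msz_sub_one_le n k) (hm n) (hm0 n) (by positivity)
    _ = _ := by
        rw [← Real.rpow_natCast, ← Real.rpow_mul (by norm_num), ← Real.rpow_neg (by norm_num)]
        rw [show (k + c - A) * (n : ℝ) = n * k + n * c + -(n * A) by ring,
          Real.rpow_add (by norm_num), Real.rpow_add (by norm_num)]
        ring

namespace Link
variable {Q W U X Z Y : Type*} [Fintype Q] [Fintype W] [Fintype U] [Fintype X]
    [Fintype Z] [Fintype Y] (D : Link Q W U X Z Y)

open Classical in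
lemma ind_le (a b c d : Prop) : (if ¬ (¬ a ∧ ¬ b ∧ ¬ c ∧ ¬ d) then (1 : ℝ) else 0) ≤
    (if a then 1 else 0) + (if b then 1 else 0) + (if c then 1 else 0)
      + (if d then 1 else 0) := by
  by_cases a <;> by_cases b <;> by_cases c <;> by_cases d <;> simp [*] <;> norm_num

open Classical in
/-- The true codewords pass the tests with probability tending to one. -/
lemma test_tendsto {A B C E : ℝ} (ha : A < D.Ja) (hd : B < D.Jd) (he : C < D.Je)
    (hg : E < D.Jg) :
    Filter.Tendsto (fun n : ℕ => ∑ ω, (D.block n).joint ω *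
      (if ¬ (D.block n).Test (2 ^ (n * A)) (2 ^ (n * B)) (2 ^ (n * C)) (2 ^ (n * E))
        ω.1 ω.2.1 ω.2.2.1 ω.2.2.2.2 ω.2.2.2.1 then 1 else 0)) Filter.atTop (nhds 0) := by
  have ta := aep D.joint D.joint_nn D.joint_sum _ _ (fun ω h => (D.pos_of_joint_pos ω h).1)
    (fun ω h => (D.pos_of_joint_pos ω h).2.1) A ha
  have td := aep D.joint D.joint_nn D.joint_sum _ _ (fun ω h => (D.pos_of_joint_pos ω h).1)
    (fun ω h => (D.pos_of_joint_pos ω h).2.2.1) B hd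
  have te := aep D.joint D.joint_nn D.joint_sum _ _ (fun ω h => (D.pos_of_joint_pos ω h).1)
    (fun ω h => (D.pos_of_joint_pos ω h).2.2.2.1) C he
  have tg := aep D.joint D.joint_nn D.joint_sum _ _ (fun ω h => (D.pos_of_joint_pos ω h).1)
    (fun ω h => (D.pos_of_joint_pos ω h).2.2.2.2) E hg
  have := ((ta.add td).add te).add tg
  simp only [add_zero] at this
  refine squeeze_zero (fun n => Finset.sum_nonneg fun ω _ => mul_nonneg
    ((D.block n).joint_nn ω) (by split_ifs <;> norm_num)) (fun n => ?_) this
  rw [D.block_joint_sum n]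
  simp only [← Finset.sum_add_distrib, ← mul_add]
  refine Finset.sum_le_sum fun ω _ => mul_le_mul_of_nonneg_left ?_
    (Finset.prod_nonneg fun i _ => D.joint_nn _)
  simp only [Test, block_V, block_Pa, block_Pd, block_Pe, block_Pg, ← not_lt]
  rw [not_lt]
  exact ind_le _ _ _ _

/-- The rate conditions of one receiver, with `k` and `c` its own private and common rates and `c'` the
common rate of the interferer. A layer of rate zero imposes no condition. -/
def Rates (k c c' : ℝ) : Prop :=
  (k = 0 ∨ (k < D.Ja ∧ k + c' < D.Je)) ∧ (c = 0 ∨ (k + c < D.Jd ∧ k + c + c' < D.Jg))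

open Classical in
/-- Under the rate conditions the average error over random codebooks tends to zero, uniformly in the
messages and whatever the number of private messages of the interferer. -/
lemma exists_decoder {k c c' : ℝ} (hk : 0 ≤ k) (hc' : 0 ≤ c')
    (h : D.Rates k c c') {ε : ℝ} (hε : 0 < ε) :
    ∃ N : ℕ, ∀ n ≥ N, ∀ K' : Type, ∀ [Fintype K'] [DecidableEq K'],
      ∃ φ : (Fin n → Q) → (Fin (msz n c) → (Fin n → W) × (Fin (msz n k) → Fin n → X)) →
        (Fin (msz n c') → (Fin n → U) × (K' → Fin n → Z)) → (Fin n → Y) →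
          Fin (msz n c) × Fin (msz n k),
      ∀ (m : Fin (msz n c) × Fin (msz n k)) (m' : Fin (msz n c') × K'), ∑ q, (D.block n).pQ q *
        dE (bookP ((D.block n).pW q) (fun w => (D.block n).pX w q))
          (bookP ((D.block n).pU q) (fun u => (D.block n).pZ u q))
        (fun b b' => ∑ y, (D.block n).ch ((b m.1).2 m.2) ((b' m'.1).2 m'.2) y *
          (if φ q b b' y ≠ m then 1 else 0)) ≤ ε := by
  -- test levels strictly between the sums of rates and the informations
  have hex : ∀ (J r s : ℝ), (r = 0 ∨ s < J) → ∃ A, A < J ∧ (r = 0 ∨ s < A) := by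
    intro J r s h
    rcases h with h | h
    · exact ⟨J - 1, by linarith, Or.inl h⟩
    · exact ⟨(s + J) / 2, by linarith, Or.inr (by linarith)⟩
  obtain ⟨A, hA, hA'⟩ := hex D.Ja k k (h.1.imp_right And.left)
  obtain ⟨E, hE, hE'⟩ := hex D.Je k (k + c') (h.1.imp_right And.right)
  obtain ⟨B, hB, hB'⟩ := hex D.Jd c (k + c) (h.2.imp_right And.left)
  obtain ⟨G, hG, hG'⟩ := hex D.Jg c (k + c + c') (h.2.imp_right And.right)
  have t0 := D.test_tendsto hA hB hE hG
  have ta := count_tendsto (k := k) (c := 0) (A := A) (C := 1) (by simpa using hA')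
    (fun _ => 1) (by simp) (by simp)
  have te := count_tendsto (k := k) (c := c') (A := E) (C := 2) hE'
    (fun n => msz n c') (fun _ => Nat.cast_nonneg _) (fun n => msz_le n hc')
  have td := count_tendsto (k := c) (c := k) (A := B) (C := 2) (by rwa [add_comm c k])
    (fun n => msz n k) (fun _ => Nat.cast_nonneg _) (fun n => msz_le n hk)
  have tg := count_tendsto (k := c) (c := k + c') (A := G) (C := 4)
    (by rwa [show c + (k + c') = k + c + c' by ring])
    (fun n => msz n k * msz n c') (fun _ => by positivity) (fun n => by
      have := mul_le_mul (msz_le n hk) (msz_le n hc') (Nat.cast_nonneg _) (by positivity)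
      rw [mul_add, Real.rpow_add (by norm_num)]
      linarith)
  have tt := t0.add (((ta.add te).add td).add tg)
  simp only [add_zero, mul_one] at tt
  obtain ⟨N, hN⟩ := Filter.eventually_atTop.1 (tt.eventually (gt_mem_nhds hε))
  refine ⟨N, fun n hn K' _ _ => ⟨fun q b b' => dec ((D.block n).Test (2 ^ (n * A)) (2 ^ (n * B))
    (2 ^ (n * E)) (2 ^ (n * G)) q) b b', fun ⟨l, m⟩ ⟨l', m'⟩ => ?_⟩⟩
  refine ((D.block n).one_shot (2 ^ (n * A)) (2 ^ (n * B)) (2 ^ (n * E)) (2 ^ (n * G))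
    (by positivity) (by positivity) (by positivity) (by positivity) l m l' m').trans ?_
  refine le_trans (le_of_eq ?_) (hN n hn).le
  simp only [Fintype.card_fin, mul_assoc]

end Link

/-! ### Source compression and the two-user code -/

lemma exists_le_of_wsum {α : Type*} [Fintype α] {p F : α → ℝ} {δ : ℝ} (hp : ∀ a, 0 ≤ p a)
    (hs : ∑ a, p a = 1) (h : ∑ a, p a * F a ≤ δ) : ∃ a, F a ≤ δ := by
  by_contra! hF
  have h1 : ∑ a, p a * δ ≤ ∑ a, p a * F a := wsum_mono hp fun a => (hF a).le
  rw [← Finset.sum_mul, hs, one_mul] at h1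
  obtain ⟨a, ha⟩ : ∃ a, 0 < p a := by
    by_contra! h0
    have := Finset.sum_nonpos fun a (_ : a ∈ Finset.univ) => h0 a
    linarith
  have h2 : ∑ a, p a * δ < ∑ a, p a * F a :=
    Finset.sum_lt_sum (fun a _ => mul_le_mul_of_nonneg_left (hF a).le (hp a))
      ⟨a, Finset.mem_univ _, mul_lt_mul_of_pos_left (hF a) ha⟩
  rw [← Finset.sum_mul, hs, one_mul] at h2
  linarith

lemma dE_const_mul {α β : Type*} [Fintype α] [Fintype β] (p : α → ℝ) (q : β → ℝ) (r : ℝ)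
    (Φ : α → β → ℝ) : dE p q (fun a b => r * Φ a b) = r * dE p q Φ := by
  simp only [dE, Finset.mul_sum]
  refine Finset.sum_congr rfl fun a _ => Finset.sum_congr rfl fun b _ => by ring

open Classical in
/-- Fixed-length source coding: the blocks of probability at least `2 ^ (-n (k + c))` number at most
`2 ^ (n (k + c))`, so they can be indexed by message pairs. -/
lemma source_code {S : Type*} [Fintype S] [DecidableEq S] (p : S → ℝ) (hp : ∀ s, 0 ≤ p s) (hs : ∑ s, p s = 1)
    {k c : ℝ} (h : pmfEnt p < k + c) {ε : ℝ} (hε : 0 < ε) :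
    ∃ N : ℕ, ∀ n ≥ N, ∃ (e : (Fin n → S) → Fin (msz n c) × Fin (msz n k))
      (d : Fin (msz n c) × Fin (msz n k) → (Fin n → S)),
      ∑ s : Fin n → S, (∏ i, p (s i)) * (if d (e s) ≠ s then 1 else 0) ≤ ε := by
  have ht := aep p hp hs p (fun _ => 1) (fun _ h => h) (fun _ _ => one_pos) (-(k + c)) (by
    simp only [div_one]
    simp only [pmfEnt, Finset.sum_neg_distrib] at h
    linarith)
  obtain ⟨N, hN⟩ := Filter.eventually_atTop.1 (ht.eventually (gt_mem_nhds hε))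
  refine ⟨N, fun n hn => ?_⟩
  set T : Finset (Fin n → S) :=
    Finset.univ.filter fun s => (2 : ℝ) ^ (n * (-(k + c))) ≤ ∏ i, p (s i) with hT
  have hcard : (T.card : ℝ) ≤ 2 ^ (n * (k + c)) := by
    have h1 : ∑ s ∈ T, (2 : ℝ) ^ (n * (-(k + c))) ≤ ∑ s ∈ T, ∏ i, p (s i) :=
      Finset.sum_le_sum fun s hs => (Finset.mem_filter.1 hs).2
    have h2 : ∑ s ∈ T, ∏ i, p (s i) ≤ ∑ s : Fin n → S, ∏ i, p (s i) :=
      Finset.sum_le_sum_of_subset_of_nonneg (Finset.subset_univ _)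
        fun s _ _ => Finset.prod_nonneg fun i _ => hp _
    rw [sum_pi_prod (fun _ => p)] at h2
    simp only [hs, Finset.prod_const_one] at h2
    rw [Finset.sum_const, nsmul_eq_mul, mul_neg, Real.rpow_neg (by norm_num)] at h1
    have h3 := h1.trans h2
    rwa [← div_eq_mul_inv, div_le_one (by positivity)] at h3
  have hcard' : Fintype.card T ≤ Fintype.card (Fin (msz n c) × Fin (msz n k)) := by
    simp only [Fintype.card_coe, Fintype.card_prod, Fintype.card_fin]
    have : (T.card : ℝ) ≤ msz n c * msz n k := by
      refine hcard.trans ?_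
      rw [mul_add, add_comm, Real.rpow_add (by norm_num)]
      exact mul_le_mul (le_msz _ _) (le_msz _ _) (by positivity) (by positivity)
    exact_mod_cast this
  obtain ⟨g⟩ := Function.Embedding.nonempty_of_card_le hcard'
  obtain ⟨s0⟩ : Nonempty S := by
    by_contra hne
    rw [not_nonempty_iff] at hne
    simp at hs
  refine ⟨fun s => if h : s ∈ T then g ⟨s, h⟩ else Classical.arbitrary _,
    Function.extend g Subtype.val (fun _ _ => s0), le_trans ?_ (hN n hn).le⟩
  refine wsum_mono (fun s => Finset.prod_nonneg fun i _ => hp _) fun s => ?_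
  by_cases hsT : s ∈ T
  · rw [if_neg]
    · split_ifs <;> norm_num
    · rw [not_not]
      simp only [dif_pos hsT]
      rw [g.injective.extend_apply]
  · have h1 : ¬ (2 : ℝ) ^ (n * (-(k + c))) ≤ ∏ i, p (s i) := fun h =>
      hsT (Finset.mem_filter.2 ⟨Finset.mem_univ _, h⟩)
    have h2 : ∏ i, p (s i) < (2 : ℝ) ^ (n * (-(k + c))) * ∏ _i : Fin n, (1 : ℝ) := by
      rw [Finset.prod_const_one, mul_one]
      exact not_le.1 h1
    rw [if_pos h2]
    split_ifs <;> norm_num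

/-- An interference channel with a Han-Kobayashi input distribution. -/
structure HK (Q W1 W2 X1 X2 Y1 Y2 : Type*) [Fintype Q] [Fintype W1] [Fintype W2] [Fintype X1]
    [Fintype X2] [Fintype Y1] [Fintype Y2] where
  pQ : Q → ℝ
  pW1 : Q → W1 → ℝ
  pW2 : Q → W2 → ℝ
  pX1 : W1 → Q → X1 → ℝ
  pX2 : W2 → Q → X2 → ℝ
  chan : X1 → X2 → Y1 → Y2 → ℝ
  pQ_nn : ∀ q, 0 ≤ pQ q
  pQ_sum : ∑ q, pQ q = 1
  pW1_nn : ∀ q w, 0 ≤ pW1 q w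
  pW1_sum : ∀ q, ∑ w, pW1 q w = 1
  pW2_nn : ∀ q w, 0 ≤ pW2 q w
  pW2_sum : ∀ q, ∑ w, pW2 q w = 1
  pX1_nn : ∀ w q x, 0 ≤ pX1 w q x
  pX1_sum : ∀ w q, ∑ x, pX1 w q x = 1
  pX2_nn : ∀ w q x, 0 ≤ pX2 w q x
  pX2_sum : ∀ w q, ∑ x, pX2 w q x = 1
  chan_nn : ∀ x1 x2 y1 y2, 0 ≤ chan x1 x2 y1 y2
  chan_sum : ∀ x1 x2, ∑ y1, ∑ y2, chan x1 x2 y1 y2 = 1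

namespace HK
variable {Q W1 W2 X1 X2 Y1 Y2 : Type*} [Fintype Q] [Fintype W1] [Fintype W2] [Fintype X1]
    [Fintype X2] [Fintype Y1] [Fintype Y2] (N : HK Q W1 W2 X1 X2 Y1 Y2)

/-- The two users exchanged. -/
def swap : HK Q W2 W1 X2 X1 Y2 Y1 where
  pQ := N.pQ
  pW1 := N.pW2
  pW2 := N.pW1
  pX1 := N.pX2
  pX2 := N.pX1
  chan x2 x1 y2 y1 := N.chan x1 x2 y1 y2
  pQ_nn := N.pQ_nn
  pQ_sum := N.pQ_sum
  pW1_nn := N.pW2_nn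
  pW1_sum := N.pW2_sum
  pW2_nn := N.pW1_nn
  pW2_sum := N.pW1_sum
  pX1_nn := N.pX2_nn
  pX1_sum := N.pX2_sum
  pX2_nn := N.pX1_nn
  pX2_sum := N.pX1_sum
  chan_nn _ _ _ _ := N.chan_nn _ _ _ _
  chan_sum x2 x1 := by rw [Finset.sum_comm, N.chan_sum]

/-- The link of receiver 1; its channel is the marginal of `chan` on `Y1`. -/
def link1 : Link Q W1 W2 X1 X2 Y1 where
  pQ := N.pQ
  pW := N.pW1
  pU := N.pW2
  pX := N.pX1
  pZ := N.pX2
  ch x1 x2 y1 := ∑ y2, N.chan x1 x2 y1 y2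
  pQ_nn := N.pQ_nn
  pQ_sum := N.pQ_sum
  pW_nn := N.pW1_nn
  pW_sum := N.pW1_sum
  pU_nn := N.pW2_nn
  pU_sum := N.pW2_sum
  pX_nn := N.pX1_nn
  pX_sum := N.pX1_sum
  pZ_nn := N.pX2_nn
  pZ_sum := N.pX2_sum
  ch_nn _ _ _ := Finset.sum_nonneg fun _ _ => N.chan_nn _ _ _ _
  ch_sum := N.chan_sum

/-- The link of receiver 2. -/
abbrev link2 : Link Q W2 W1 X2 X1 Y2 := N.swap.link1

lemma icPe1_eq {S T : Type*} [Fintype S] [Fintype T] [DecidableEq S] (pST : S → T → ℝ) (n : ℕ)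
    (f1 : (Fin n → S) → Fin n → X1) (f2 : (Fin n → T) → Fin n → X2)
    (φ : (Fin n → Y1) → Fin n → S) :
    icPe1 pST N.chan n f1 f2 φ = ∑ s : Fin n → S, ∑ t : Fin n → T, (∏ i, pST (s i) (t i)) *
      ∑ y, (N.link1.block n).ch (f1 s) (f2 t) y * (if φ y ≠ s then 1 else 0) := by
  refine Finset.sum_congr rfl fun s _ => Finset.sum_congr rfl fun t _ => ?_
  rw [Finset.mul_sum]
  refine Finset.sum_congr rfl fun y _ => ?_
  have : (N.link1.block n).ch (f1 s) (f2 t) y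
      = ∑ y2 : Fin n → Y2, ∏ i, N.chan (f1 s i) (f2 t i) (y i) (y2 i) :=
    (sum_pi_prod (fun i y2 => N.chan (f1 s i) (f2 t i) (y i) y2)).symm
  rw [this]
  split_ifs <;> simp [Finset.mul_sum]

lemma icPe2_eq {S T : Type*} [Fintype S] [Fintype T] [DecidableEq T] (pST : S → T → ℝ) (n : ℕ)
    (f1 : (Fin n → S) → Fin n → X1) (f2 : (Fin n → T) → Fin n → X2)
    (φ : (Fin n → Y2) → Fin n → T) :
    icPe2 pST N.chan n f1 f2 φ = icPe1 (fun t s => pST s t) N.swap.chan n f2 f1 φ := by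
  unfold icPe2 icPe1
  rw [Finset.sum_comm]
  refine Finset.sum_congr rfl fun s _ => Finset.sum_congr rfl fun t _ => ?_
  rw [Finset.sum_comm]
  rfl

open Classical in
/-- The error probability is at most that of the source code plus that of the channel code. -/
lemma icPe1_le {S T M : Type*} [DecidableEq M] [Fintype S] [Fintype T] [hS : DecidableEq S] (pST : S → T → ℝ)
    (hnn : ∀ s t, 0 ≤ pST s t) (n : ℕ)
    (f1 : (Fin n → S) → Fin n → X1) (f2 : (Fin n → T) → Fin n → X2)
    (φ : (Fin n → Y1) → M) (e : (Fin n → S) → M) (d : M → Fin n → S) :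
    icPe1 pST N.chan n f1 f2 (fun y => d (φ y)) ≤
      ∑ s : Fin n → S, (∏ i, ∑ t, pST (s i) t) * (if d (e s) ≠ s then 1 else 0)
      + ∑ s : Fin n → S, ∑ t : Fin n → T, (∏ i, pST (s i) (t i)) *
      ∑ y, (N.link1.block n).ch (f1 s) (f2 t) y * (if φ y ≠ e s then 1 else 0) := by
  rw [icPe1_eq]
  have h1 : ∀ s : Fin n → S, ∏ i, ∑ t, pST (s i) t = ∑ t : Fin n → T, ∏ i, pST (s i) (t i) :=
    fun s => (sum_pi_prod (fun i t => pST (s i) t)).symm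
  simp only [h1, Finset.sum_mul, ← Finset.sum_add_distrib, ← mul_add]
  refine Finset.sum_le_sum fun s _ => Finset.sum_le_sum fun t _ =>
    mul_le_mul_of_nonneg_left ?_ (Finset.prod_nonneg fun i _ => hnn _ _)
  by_cases hd : d (e s) = s
  · rw [if_neg (not_not.2 hd), zero_add]
    refine wsum_mono (fun y => (N.link1.block n).ch_nn _ _ _) fun y => ?_
    by_cases hy : φ y = e s
    · rw [if_neg (not_not.2 (by rw [hy, hd]))]
      split_ifs <;> norm_num
    · rw [if_pos hy]
      split_ifs <;> norm_num
  · rw [if_pos hd]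
    have h2 : ∑ y, (N.link1.block n).ch (f1 s) (f2 t) y * (if d (φ y) ≠ s then 1 else 0)
        ≤ ∑ y, (N.link1.block n).ch (f1 s) (f2 t) y * 1 :=
      wsum_mono (fun y => (N.link1.block n).ch_nn _ _ _) fun y => by split_ifs <;> norm_num
    simp only [mul_one, (N.link1.block n).ch_sum] at h2
    refine h2.trans (le_add_of_nonneg_right (Finset.sum_nonneg fun y _ =>
      mul_nonneg ((N.link1.block n).ch_nn _ _ _) (by split_ifs <;> norm_num)))

open Classical in
/-- Decoders with small average error over random codebooks, together with good source codes, give a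
code with small error. -/
lemma exists_code {S T : Type*} [Fintype S] [Fintype T] [DecidableEq S]
    [DecidableEq T] (pST : S → T → ℝ) (hnn : ∀ s t, 0 ≤ pST s t)
    (hsum : ∑ s, ∑ t, pST s t = 1) (n : ℕ) {C1 K1 C2 K2 : Type} [Fintype C1] [Fintype K1]
    [Fintype C2] [Fintype K2] [DecidableEq C1] [DecidableEq K1] [DecidableEq C2] [DecidableEq K2]
    {ε : ℝ} (hε : 0 < ε)
    (e1 : (Fin n → S) → C1 × K1) (d1 : C1 × K1 → Fin n → S)
    (e2 : (Fin n → T) → C2 × K2) (d2 : C2 × K2 → Fin n → T)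
    (hd1 : ∑ s : Fin n → S, (∏ i, ∑ t, pST (s i) t) * (if d1 (e1 s) ≠ s then 1 else 0) ≤ ε / 4)
    (hd2 : ∑ t : Fin n → T, (∏ i, ∑ s, pST s (t i)) * (if d2 (e2 t) ≠ t then 1 else 0) ≤ ε / 4)
    (φ1 : (Fin n → Q) → (C1 → (Fin n → W1) × (K1 → Fin n → X1)) →
      (C2 → (Fin n → W2) × (K2 → Fin n → X2)) → (Fin n → Y1) → C1 × K1)
    (φ2 : (Fin n → Q) → (C2 → (Fin n → W2) × (K2 → Fin n → X2)) →
      (C1 → (Fin n → W1) × (K1 → Fin n → X1)) → (Fin n → Y2) → C2 × K2)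
    (hφ1 : ∀ (m : C1 × K1) (m' : C2 × K2), ∑ q, (N.link1.block n).pQ q *
        dE (bookP ((N.link1.block n).pW q) (fun w => (N.link1.block n).pX w q))
          (bookP ((N.link1.block n).pU q) (fun u => (N.link1.block n).pZ u q))
        (fun b b' => ∑ y, (N.link1.block n).ch ((b m.1).2 m.2) ((b' m'.1).2 m'.2) y *
          (if φ1 q b b' y ≠ m then 1 else 0)) ≤ ε / 4)
    (hφ2 : ∀ (m : C2 × K2) (m' : C1 × K1), ∑ q, (N.link2.block n).pQ q *
        dE (bookP ((N.link2.block n).pW q) (fun w => (N.link2.block n).pX w q))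
          (bookP ((N.link2.block n).pU q) (fun u => (N.link2.block n).pZ u q))
        (fun b b' => ∑ y, (N.link2.block n).ch ((b m.1).2 m.2) ((b' m'.1).2 m'.2) y *
          (if φ2 q b b' y ≠ m then 1 else 0)) ≤ ε / 4) :
    ∃ (f1 : (Fin n → S) → Fin n → X1) (f2 : (Fin n → T) → Fin n → X2)
      (φ1 : (Fin n → Y1) → Fin n → S) (φ2 : (Fin n → Y2) → Fin n → T),
      max (icPe1 pST N.chan n f1 f2 φ1) (icPe2 pST N.chan n f1 f2 φ2) ≤ ε := by
  set L1 := N.link1.block n with hL1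
  set L2 := N.link2.block n with hL2
  let B1 := C1 → (Fin n → W1) × (K1 → Fin n → X1)
  let B2 := C2 → (Fin n → W2) × (K2 → Fin n → X2)
  let g1 : B1 → (Fin n → S) → Fin n → X1 := fun b s => (b (e1 s).1).2 (e1 s).2
  let g2 : B2 → (Fin n → T) → Fin n → X2 := fun b t => (b (e2 t).1).2 (e2 t).2
  let E1 : (Fin n → Q) → B1 → B2 → (Fin n → S) → (Fin n → T) → ℝ := fun q b1 b2 s t =>
    ∑ y, L1.ch (g1 b1 s) (g2 b2 t) y * (if φ1 q b1 b2 y ≠ e1 s then 1 else 0)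
  let E2 : (Fin n → Q) → B1 → B2 → (Fin n → S) → (Fin n → T) → ℝ := fun q b1 b2 s t =>
    ∑ y, L2.ch (g2 b2 t) (g1 b1 s) y * (if φ2 q b2 b1 y ≠ e2 t then 1 else 0)
  let P : (Fin n → S) → (Fin n → T) → ℝ := fun s t => ∏ i, pST (s i) (t i)
  have hP : ∀ s t, 0 ≤ P s t := fun s t => Finset.prod_nonneg fun i _ => hnn _ _
  have hPsum : ∑ s, ∑ t, P s t = 1 := by
    have h1 : ∀ s : Fin n → S, ∑ t : Fin n → T, P s t = ∏ i, ∑ t, pST (s i) t :=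
      fun s => sum_pi_prod (fun i t => pST (s i) t)
    simp only [h1]
    rw [sum_pi_prod (fun _ s => ∑ t, pST s t)]
    simp [hsum]
  let β1 : (Fin n → Q) → B1 → ℝ := fun q => bookP (L1.pW q) (fun w => L1.pX w q)
  let β2 : (Fin n → Q) → B2 → ℝ := fun q => bookP (L1.pU q) (fun u => L1.pZ u q)
  have hE1 : ∀ s t, ∑ q, L1.pQ q * dE (β1 q) (β2 q) (fun b1 b2 => E1 q b1 b2 s t) ≤ ε / 4 :=
    fun s t => hφ1 (e1 s) (e2 t)
  have hE2 : ∀ s t, ∑ q, L1.pQ q * dE (β1 q) (β2 q) (fun b1 b2 => E2 q b1 b2 s t) ≤ ε / 4 := by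
    intro s t
    refine le_trans (le_of_eq ?_) (hφ2 (e2 t) (e1 s))
    refine Finset.sum_congr rfl fun q _ => ?_
    rw [dE_swap]
    rfl
  have hav : ∑ q, L1.pQ q * dE (β1 q) (β2 q) (fun b1 b2 => ∑ s, ∑ t, P s t *
      (E1 q b1 b2 s t + E2 q b1 b2 s t)) ≤ ε / 2 := by
    calc _ = ∑ s, ∑ t, P s t * (∑ q, L1.pQ q * dE (β1 q) (β2 q) (fun b1 b2 => E1 q b1 b2 s t)
          + ∑ q, L1.pQ q * dE (β1 q) (β2 q) (fun b1 b2 => E2 q b1 b2 s t)) := by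
          simp only [dE_sum, dE_const_mul, dE_add, Finset.mul_sum, ← Finset.sum_add_distrib]
          rw [Finset.sum_comm]
          refine Finset.sum_congr rfl fun s _ => ?_
          rw [Finset.sum_comm]
          refine Finset.sum_congr rfl fun t _ => Finset.sum_congr rfl fun q _ => ?_
          ring
      _ ≤ ∑ s, ∑ t, P s t * (ε / 4 + ε / 4) :=
          Finset.sum_le_sum fun s _ => wsum_mono (hP s) fun t => add_le_add (hE1 s t) (hE2 s t)
      _ = ε / 2 := by
          simp only [← Finset.sum_mul, hPsum]
          ring
  -- The sum of both errors is small on average, so one time-sharing sequence and one pair of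
  -- codebooks make both errors small at once.
  obtain ⟨q, hq⟩ := exists_le_of_wsum L1.pQ_nn L1.pQ_sum hav
  obtain ⟨b1, hb1⟩ := exists_le_of_wsum (bookP_nonneg (L1.pW_nn q) (fun w => L1.pX_nn w q))
    (bookP_sum (L1.pW_sum q) (fun w => L1.pX_sum w q)) hq
  obtain ⟨b2, hb2⟩ := exists_le_of_wsum (bookP_nonneg (L1.pU_nn q) (fun w => L1.pZ_nn w q))
    (bookP_sum (L1.pU_sum q) (fun w => L1.pZ_sum w q)) hb1
  simp only [mul_add, Finset.sum_add_distrib] at hb2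
  have hE1n : 0 ≤ ∑ s, ∑ t, P s t * E1 q b1 b2 s t := Finset.sum_nonneg fun s _ =>
    Finset.sum_nonneg fun t _ => mul_nonneg (hP s t) (Finset.sum_nonneg fun y _ =>
      mul_nonneg (L1.ch_nn _ _ _) (by split_ifs <;> norm_num))
  have hE2n : 0 ≤ ∑ s, ∑ t, P s t * E2 q b1 b2 s t := Finset.sum_nonneg fun s _ =>
    Finset.sum_nonneg fun t _ => mul_nonneg (hP s t) (Finset.sum_nonneg fun y _ =>
      mul_nonneg (L2.ch_nn _ _ _) (by split_ifs <;> norm_num))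
  refine ⟨g1 b1, g2 b2, fun y => d1 (φ1 q b1 b2 y), fun y => d2 (φ2 q b2 b1 y), max_le ?_ ?_⟩
  · refine (N.icPe1_le pST hnn n (g1 b1) (g2 b2) (φ1 q b1 b2) e1 d1).trans ?_
    have : ∑ s, ∑ t, P s t * E1 q b1 b2 s t ≤ ε / 2 := by linarith
    refine (add_le_add hd1 this).trans ?_
    linarith
  · rw [icPe2_eq]
    refine (N.swap.icPe1_le (fun t s => pST s t) (fun t s => hnn s t) n (g2 b2) (g1 b1)
      (φ2 q b2 b1) e2 d2).trans ?_
    have : ∑ s, ∑ t, P s t * E2 q b1 b2 s t ≤ ε / 2 := by linarith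
    rw [Finset.sum_comm] at this
    refine (add_le_add hd2 this).trans ?_
    linarith

open Classical in
/-- Coding theorem for a given split of the rates into private and common parts. -/
theorem admissible_of_rates {S T : Type*} [Fintype S] [Fintype T] [DecidableEq S]
    [DecidableEq T] (pST : S → T → ℝ) (hnn : ∀ s t, 0 ≤ pST s t)
    (hsum : ∑ s, ∑ t, pST s t = 1) {k1 c1 k2 c2 : ℝ} (hk1 : 0 ≤ k1) (hc1 : 0 ≤ c1)
    (hk2 : 0 ≤ k2) (hc2 : 0 ≤ c2)
    (hS : pmfEnt (fun s => ∑ t, pST s t) < k1 + c1)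
    (hT : pmfEnt (fun t => ∑ s, pST s t) < k2 + c2)
    (hr1 : N.link1.Rates k1 c1 c2) (hr2 : N.link2.Rates k2 c2 c1) :
    ICAdmissible pST N.chan := by
  intro ε hε _
  obtain ⟨N1, h1⟩ := source_code (fun s => ∑ t, pST s t)
    (fun s => Finset.sum_nonneg fun t _ => hnn s t) hsum hS (ε := ε / 4) (by positivity)
  obtain ⟨N2, h2⟩ := source_code (fun t => ∑ s, pST s t)
    (fun t => Finset.sum_nonneg fun s _ => hnn s t) (by rw [Finset.sum_comm]; exact hsum) hT
    (ε := ε / 4) (by positivity)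
  obtain ⟨N3, h3⟩ := N.link1.exists_decoder hk1 hc2 hr1 (ε := ε / 4) (by positivity)
  obtain ⟨N4, h4⟩ := N.link2.exists_decoder hk2 hc1 hr2 (ε := ε / 4) (by positivity)
  refine ⟨max (max N1 N2) (max N3 N4), fun n hn => ?_⟩
  simp only [max_le_iff] at hn
  obtain ⟨⟨hn1, hn2⟩, hn3, hn4⟩ := hn
  obtain ⟨e1, d1, hd1⟩ := h1 n hn1
  obtain ⟨e2, d2, hd2⟩ := h2 n hn2
  obtain ⟨φ1, hφ1⟩ := h3 n hn3 (Fin (msz n k2))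
  obtain ⟨φ2, hφ2⟩ := h4 n hn4 (Fin (msz n k1))
  exact N.exists_code pST hnn hsum n hε e1 d1 e2 d2 hd1 hd2 φ1 φ2 hφ1 hφ2

end HK

/-! ### Conditional mutual information as an expected log-ratio -/

section Entropy
variable {Ω α γ η : Type*} [Fintype Ω] [Fintype α] [Fintype γ] [Fintype η]
  [DecidableEq α] [DecidableEq γ] [DecidableEq η]

lemma margEnt_eq (p : Ω → ℝ) (f : Ω → α) :
    margEnt p f = -∑ ω, p ω * Real.logb 2 (∑ ω', if f ω' = f ω then p ω' else 0) := by
  unfold margEnt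
  rw [Finset.sum_neg_distrib, neg_inj]
  simp only [Finset.sum_mul]
  rw [Finset.sum_comm]
  refine Finset.sum_congr rfl fun ω _ => ?_
  rw [Finset.sum_eq_single (f ω)]
  · simp
  · intro a _ ha
    rw [if_neg (Ne.symm ha), zero_mul]
  · simp

/-- The chain rule `H(C,Y) - H(C) = H(Y|C)`, where `f` is a relabelling of `(C, Y)`. By `hKC` and `hK`,
the function `K` is the conditional law of `Y` given `C`. -/
lemma margEnt_sub (p : Ω → ℝ) (hp : ∀ ω, 0 ≤ p ω) (f : Ω → α) (C : Ω → γ) (Y : Ω → η)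
    (hf : ∀ ω ω', f ω = f ω' ↔ C ω = C ω' ∧ Y ω = Y ω') (K : Ω → η → ℝ)
    (hKC : ∀ ω ω', C ω = C ω' → K ω = K ω')
    (hK : ∀ F : γ → η → ℝ, ∑ ω, p ω * F (C ω) (Y ω) = ∑ ω, p ω * ∑ y, K ω y * F (C ω) y) :
    margEnt p f - margEnt p C = -∑ ω, p ω * Real.logb 2 (K ω (Y ω)) := by
  have key : ∀ ω, (∑ ω', if f ω' = f ω then p ω' else 0)
      = (∑ ω', if C ω' = C ω then p ω' else 0) * K ω (Y ω) := by
    intro ω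
    have h := hK (fun c y => if c = C ω ∧ y = Y ω then 1 else 0)
    simp only [hf]
    simp only [mul_ite, mul_one, mul_zero] at h
    rw [h, Finset.sum_mul]
    refine Finset.sum_congr rfl fun ω' _ => ?_
    by_cases hc : C ω' = C ω
    · simp [hc, hKC ω' ω hc]
    · simp [hc]
  rw [margEnt_eq, margEnt_eq, sub_eq_iff_eq_add, ← neg_add, neg_inj, ← Finset.sum_add_distrib]
  refine Finset.sum_congr rfl fun ω _ => ?_
  rcases (hp ω).eq_or_lt with h0 | h0
  · simp [← h0]
  have hpos : 0 < ∑ ω', if f ω' = f ω then p ω' else 0 :=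
    Finset.sum_pos' (fun ω' _ => by split_ifs <;> simp [hp]) ⟨ω, Finset.mem_univ _, by simpa⟩
  rw [key] at hpos ⊢
  rw [Real.logb_mul (left_ne_zero_of_mul hpos.ne') (right_ne_zero_of_mul hpos.ne')]
  ring

/-- `I(f;Y|C) = H(Y|C) - H(Y|f,C)`, with `K` and `L` the conditional laws of `Y` given `(f, C)` and `C`. -/
lemma cmi_eq {β : Type*} [Fintype β] [DecidableEq β] (p : Ω → ℝ) (hp : ∀ ω, 0 ≤ p ω)
    (f : Ω → β) (Y : Ω → η) (C : Ω → γ) (K L : Ω → η → ℝ)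
    (hKC : ∀ ω ω', f ω = f ω' → C ω = C ω' → K ω = K ω')
    (hLC : ∀ ω ω', C ω = C ω' → L ω = L ω')
    (hK : ∀ F : β × γ → η → ℝ, ∑ ω, p ω * F (f ω, C ω) (Y ω)
      = ∑ ω, p ω * ∑ y, K ω y * F (f ω, C ω) y)
    (hL : ∀ F : γ → η → ℝ, ∑ ω, p ω * F (C ω) (Y ω) = ∑ ω, p ω * ∑ y, L ω y * F (C ω) y) :
    cmi p f Y C = ∑ ω, p ω * Real.logb 2 (K ω (Y ω)) - ∑ ω, p ω * Real.logb 2 (L ω (Y ω)) := by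
  have h1 := margEnt_sub p hp (fun ω => (f ω, Y ω, C ω)) (fun ω => (f ω, C ω)) Y
    (fun ω ω' => by simp only [Prod.mk.injEq]; tauto) K
    (fun ω ω' h => hKC ω ω' (congrArg Prod.fst h) (congrArg Prod.snd h)) hK
  have h2 := margEnt_sub p hp (fun ω => (Y ω, C ω)) C Y
    (fun ω ω' => by simp only [Prod.mk.injEq]; tauto) L hLC hL
  unfold cmi
  linarith

end Entropy

namespace Link
variable {Q W U X Z Y : Type*} [Fintype Q] [Fintype W] [Fintype U] [Fintype X]
    [Fintype Z] [Fintype Y] (D : Link Q W U X Z Y)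

/-- `p(y|q,x)` -/
noncomputable def Vs (q : Q) (x : X) (y : Y) : ℝ := ∑ u, D.pU q u * D.V q u x y

/-- Expectation over `(Q, W, X, U)` of the sum over `y` of `K * F`. It is the expectation of `F` when `K`
is the law of `Y` given the other variables. -/
noncomputable def T (K F : Q → Y → W → X → U → ℝ) : ℝ :=
  ∑ q, D.pQ q * ∑ y, ∑ w, D.pW q w * ∑ x, D.pX w q x * ∑ u, D.pU q u * (K q y w x u * F q y w x u)

lemma Pd_nn (q u y) : 0 ≤ D.Pd q u y :=
  Finset.sum_nonneg fun _ _ => mul_nonneg (D.pW_nn _ _) (D.Pa_nn _ _ _ _)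
lemma Pg_nn (q y) : 0 ≤ D.Pg q y :=
  Finset.sum_nonneg fun _ _ => mul_nonneg (D.pW_nn _ _) (D.Pe_nn _ _ _)
lemma Vs_nn (q x y) : 0 ≤ D.Vs q x y :=
  Finset.sum_nonneg fun _ _ => mul_nonneg (D.pU_nn _ _) (D.V_nn _ _ _ _)

lemma Pa_sum (q w u) : ∑ y, D.Pa q w u y = 1 := by
  unfold Pa
  rw [Finset.sum_comm]
  simp only [← Finset.mul_sum, D.V_sum, mul_one, D.pX_sum]
lemma Pd_sum (q u) : ∑ y, D.Pd q u y = 1 := by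
  unfold Pd
  rw [Finset.sum_comm]
  simp only [← Finset.mul_sum, D.Pa_sum, mul_one, D.pW_sum]
lemma Vs_sum (q x) : ∑ y, D.Vs q x y = 1 := by
  unfold Vs
  rw [Finset.sum_comm]
  simp only [← Finset.mul_sum, D.V_sum, mul_one, D.pU_sum]
lemma Pe_sum (q w) : ∑ y, D.Pe q w y = 1 := by
  unfold Pe
  rw [Finset.sum_comm]
  simp only [← Finset.mul_sum]
  have := D.Vs_sum q
  unfold Vs at this
  simp only [this, mul_one, D.pX_sum]

lemma sum_joint_eq_T (F : Q × Y × W × X × U → ℝ) :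
    ∑ ω, D.joint ω * F ω
      = D.T (fun q y _ x u => D.V q u x y) (fun q y w x u => F (q, y, w, x, u)) :=
  D.sum_joint_mul F

lemma T_congr {K K' F F' : Q → Y → W → X → U → ℝ}
    (h : ∀ q y, ∑ w, D.pW q w * ∑ x, D.pX w q x * ∑ u, D.pU q u * (K q y w x u * F q y w x u) =
      ∑ w, D.pW q w * ∑ x, D.pX w q x * ∑ u, D.pU q u * (K' q y w x u * F' q y w x u)) :
    D.T K F = D.T K' F' :=
  Finset.sum_congr rfl fun q _ => by simp only [h]

/-- In this and the next four lemmas, `p(y|q,u,x)` is replaced by the law of `Y` given only the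
variables on which the integrand depends. -/
lemma T_a (F : Q → Y → W → U → ℝ) :
    D.T (fun q y _ x u => D.V q u x y) (fun q y w _ u => F q y w u)
      = D.T (fun q y w _ u => D.Pa q w u y) (fun q y w _ u => F q y w u) := by
  refine D.T_congr fun q y => Finset.sum_congr rfl fun w _ => ?_
  rw [wsum_pull, ← Finset.sum_mul, D.pX_sum, one_mul]
  rfl

lemma T_e (F : Q → Y → W → ℝ) :
    D.T (fun q y _ x u => D.V q u x y) (fun q y w _ _ => F q y w)
      = D.T (fun q y w _ _ => D.Pe q w y) (fun q y w _ _ => F q y w) := by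
  refine D.T_congr fun q y => Finset.sum_congr rfl fun w _ => ?_
  simp only [← mul_assoc, ← Finset.sum_mul, D.pX_sum, D.pU_sum, one_mul]
  simp only [Pe, mul_assoc, Finset.sum_mul]

lemma T_v (F : Q → Y → W → X → ℝ) :
    D.T (fun q y _ x u => D.V q u x y) (fun q y w x _ => F q y w x)
      = D.T (fun q y _ x _ => D.Vs q x y) (fun q y w x _ => F q y w x) := by
  refine D.T_congr fun q y => Finset.sum_congr rfl fun w _ => ?_
  congr 1
  refine Finset.sum_congr rfl fun x _ => ?_
  congr 1
  rw [← Finset.sum_mul, D.pU_sum, one_mul]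
  simp only [← mul_assoc, ← Finset.sum_mul]
  rfl

lemma T_d (F : Q → Y → U → ℝ) :
    D.T (fun q y _ x u => D.V q u x y) (fun q y _ _ u => F q y u)
      = D.T (fun q y _ _ u => D.Pd q u y) (fun q y _ _ u => F q y u) := by
  rw [D.T_a (fun q y _ u => F q y u)]
  refine D.T_congr fun q y => ?_
  simp only [← Finset.sum_mul, D.pX_sum, one_mul, D.pW_sum]
  rw [wsum_pull]
  rfl

lemma T_g (F : Q → Y → ℝ) :
    D.T (fun q y _ x u => D.V q u x y) (fun q y _ _ _ => F q y)
      = D.T (fun q y _ _ _ => D.Pg q y) (fun q y _ _ _ => F q y) := by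
  rw [D.T_e (fun q y _ => F q y)]
  refine D.T_congr fun q y => ?_
  simp only [← Finset.sum_mul, D.pX_sum, one_mul, D.pW_sum, D.pU_sum]
  simp only [← mul_assoc, ← Finset.sum_mul]
  rfl

/-- Expectation over `(Q, W, X, U)`. -/
noncomputable def EE (G : Q → W → X → U → ℝ) : ℝ :=
  ∑ q, D.pQ q * ∑ w, D.pW q w * ∑ x, D.pX w q x * ∑ u, D.pU q u * G q w x u

lemma T_eq_EE (K F : Q → Y → W → X → U → ℝ) :
    D.T K F = D.EE (fun q w x u => ∑ y, K q y w x u * F q y w x u) := by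
  refine Finset.sum_congr rfl fun q _ => ?_
  congr 1
  rw [Finset.sum_comm]
  refine Finset.sum_congr rfl fun w _ => ?_
  rw [← Finset.mul_sum]
  congr 1
  rw [Finset.sum_comm]
  refine Finset.sum_congr rfl fun x _ => ?_
  rw [← Finset.mul_sum]
  congr 1
  rw [Finset.sum_comm]
  simp only [← Finset.mul_sum]

lemma EE_one : D.EE (fun _ _ _ _ => 1) = 1 := by
  simp [EE, D.pU_sum, D.pX_sum, D.pW_sum, D.pQ_sum]

lemma EE_mono {G H : Q → W → X → U → ℝ} (h : ∀ q w x u, G q w x u ≤ H q w x u) :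
    D.EE G ≤ D.EE H :=
  wsum_mono D.pQ_nn fun q => wsum_mono (D.pW_nn q) fun w => wsum_mono (D.pX_nn w q) fun x =>
    wsum_mono (D.pU_nn q) fun u => h q w x u

/-- The defining equation of a conditional law, in the form required by `cmi_eq`. -/
lemma ker_of_T {K : Q → Y → W → X → U → ℝ} {F : Q → Y → W → X → U → ℝ}
    (h : D.T (fun q y _ x u => D.V q u x y) F = D.T K F) :
    ∑ ω : Q × Y × W × X × U, D.joint ω * F ω.1 ω.2.1 ω.2.2.1 ω.2.2.2.1 ω.2.2.2.2 =
    ∑ ω : Q × Y × W × X × U, D.joint ω * ∑ y, K ω.1 y ω.2.2.1 ω.2.2.2.1 ω.2.2.2.2 *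
      F ω.1 y ω.2.2.1 ω.2.2.2.1 ω.2.2.2.2 := by
  rw [sum_joint_eq_T, sum_joint_eq_T, h, T_eq_EE, T_eq_EE]
  simp only [← Finset.sum_mul, D.V_sum, one_mul]

/-- Nonnegativity of a conditional relative entropy, from `log x ≥ 1 - 1 / x`. By `hT`, the law `A` may
stand for that of `Y` when averaging `B / A`. -/
lemma kl {A B : Q → Y → W → X → U → ℝ}
    (hpos : ∀ ω, 0 < D.joint ω → 0 < A ω.1 ω.2.1 ω.2.2.1 ω.2.2.2.1 ω.2.2.2.2 ∧
      0 < B ω.1 ω.2.1 ω.2.2.1 ω.2.2.2.1 ω.2.2.2.2)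
    (hA : ∀ q y w x u, 0 ≤ A q y w x u)
    (hB0 : ∀ q y w x u, 0 ≤ B q y w x u) (hB : ∀ q w x u, ∑ y, B q y w x u = 1)
    (hT : D.T (fun q y _ x u => D.V q u x y) (fun q y w x u => B q y w x u / A q y w x u)
      = D.T A (fun q y w x u => B q y w x u / A q y w x u)) :
    0 ≤ ∑ ω, D.joint ω * Real.logb 2 (A ω.1 ω.2.1 ω.2.2.1 ω.2.2.2.1 ω.2.2.2.2 /
      B ω.1 ω.2.1 ω.2.2.1 ω.2.2.2.1 ω.2.2.2.2) := by
  have h1 : ∑ ω, D.joint ω * (B ω.1 ω.2.1 ω.2.2.1 ω.2.2.2.1 ω.2.2.2.2 /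
      A ω.1 ω.2.1 ω.2.2.1 ω.2.2.2.1 ω.2.2.2.2) ≤ 1 := by
    rw [sum_joint_eq_T, hT, T_eq_EE, ← D.EE_one]
    refine D.EE_mono fun q w x u => ?_
    rw [← hB q w x u]
    refine Finset.sum_le_sum fun y _ => ?_
    rcases (hA q y w x u).eq_or_lt with h | h
    · rw [← h, zero_mul]
      exact hB0 _ _ _ _ _
    · rw [mul_div_cancel₀ _ h.ne']
  have hl : 0 < Real.log 2 := Real.log_pos (by norm_num)
  have h2 : ∑ ω, D.joint ω * ((1 - B ω.1 ω.2.1 ω.2.2.1 ω.2.2.2.1 ω.2.2.2.2 /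
      A ω.1 ω.2.1 ω.2.2.1 ω.2.2.2.1 ω.2.2.2.2) / Real.log 2) ≤
      ∑ ω, D.joint ω * Real.logb 2 (A ω.1 ω.2.1 ω.2.2.1 ω.2.2.2.1 ω.2.2.2.2 /
      B ω.1 ω.2.1 ω.2.2.1 ω.2.2.2.1 ω.2.2.2.2) := by
    refine Finset.sum_le_sum fun ω _ => ?_
    rcases (D.joint_nn ω).eq_or_lt with h | h
    · simp [← h]
    obtain ⟨ha, hb⟩ := hpos ω h
    refine mul_le_mul_of_nonneg_left ?_ h.le
    rw [Real.logb, div_le_div_iff_of_pos_right hl]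
    have := Real.one_sub_inv_le_log_of_pos (div_pos ha hb)
    rwa [inv_div] at this
  refine le_trans ?_ h2
  simp only [mul_div_assoc'] at h1
  simp only [mul_div_assoc', ← Finset.sum_div, mul_sub, mul_one, Finset.sum_sub_distrib,
    D.joint_sum]
  exact div_nonneg (by linarith) hl.le

/-- The expected log-ratio to `B` is at least the one to the finer conditional law `A`. -/
lemma J_sub_le {A B : Q → Y → W → X → U → ℝ}
    (hpos : ∀ ω, 0 < D.joint ω → 0 < A ω.1 ω.2.1 ω.2.2.1 ω.2.2.2.1 ω.2.2.2.2 ∧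
      0 < B ω.1 ω.2.1 ω.2.2.1 ω.2.2.2.1 ω.2.2.2.2)
    (hA : ∀ q y w x u, 0 ≤ A q y w x u)
    (hB0 : ∀ q y w x u, 0 ≤ B q y w x u) (hB : ∀ q w x u, ∑ y, B q y w x u = 1)
    (hT : D.T (fun q y _ x u => D.V q u x y) (fun q y w x u => B q y w x u / A q y w x u)
      = D.T A (fun q y w x u => B q y w x u / A q y w x u)) :
    ∑ ω, D.joint ω * Real.logb 2 (D.V ω.1 ω.2.2.2.2 ω.2.2.2.1 ω.2.1 /
      A ω.1 ω.2.1 ω.2.2.1 ω.2.2.2.1 ω.2.2.2.2) ≤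
    ∑ ω, D.joint ω * Real.logb 2 (D.V ω.1 ω.2.2.2.2 ω.2.2.2.1 ω.2.1 /
      B ω.1 ω.2.1 ω.2.2.1 ω.2.2.2.1 ω.2.2.2.2) := by
  have h := D.kl hpos hA hB0 hB hT
  rw [← sub_nonneg, ← Finset.sum_sub_distrib]
  refine h.trans (le_of_eq (Finset.sum_congr rfl fun ω _ => ?_))
  rcases (D.joint_nn ω).eq_or_lt with h | h
  · simp [← h]
  obtain ⟨ha, hb⟩ := hpos ω h
  have hv := (D.pos_of_joint_pos ω h).1
  rw [Real.logb_div ha.ne' hb.ne', Real.logb_div hv.ne' ha.ne', Real.logb_div hv.ne' hb.ne']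
  ring

lemma Ja_nn : 0 ≤ D.Ja :=
  D.kl (A := fun q y _ x u => D.V q u x y) (B := fun q y w _ u => D.Pa q w u y)
    (fun ω h => ⟨(D.pos_of_joint_pos ω h).1, (D.pos_of_joint_pos ω h).2.1⟩)
    (fun _ _ _ _ _ => D.V_nn _ _ _ _) (fun _ _ _ _ _ => D.Pa_nn _ _ _ _)
    (fun _ _ _ _ => D.Pa_sum _ _ _) rfl

lemma Ja_le_Je : D.Ja ≤ D.Je :=
  D.J_sub_le (A := fun q y w _ u => D.Pa q w u y) (B := fun q y w _ _ => D.Pe q w y)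
    (fun ω h => ⟨(D.pos_of_joint_pos ω h).2.1, (D.pos_of_joint_pos ω h).2.2.2.1⟩)
    (fun _ _ _ _ _ => D.Pa_nn _ _ _ _) (fun _ _ _ _ _ => D.Pe_nn _ _ _)
    (fun _ _ _ _ => D.Pe_sum _ _) (D.T_a (fun q y w u => D.Pe q w y / D.Pa q w u y))

lemma Jd_le_Jg : D.Jd ≤ D.Jg :=
  D.J_sub_le (A := fun q y _ _ u => D.Pd q u y) (B := fun q y _ _ _ => D.Pg q y)
    (fun ω h => ⟨(D.pos_of_joint_pos ω h).2.2.1, (D.pos_of_joint_pos ω h).2.2.2.2⟩)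
    (fun _ _ _ _ _ => D.Pd_nn _ _ _) (fun _ _ _ _ _ => D.Pg_nn _ _)
    (fun _ _ _ _ => D.sum_y_Pg _) (D.T_d (fun q y u => D.Pg q y / D.Pd q u y))

lemma Je_le_Jg : D.Je ≤ D.Jg :=
  D.J_sub_le (A := fun q y w _ _ => D.Pe q w y) (B := fun q y _ _ _ => D.Pg q y)
    (fun ω h => ⟨(D.pos_of_joint_pos ω h).2.2.2.1, (D.pos_of_joint_pos ω h).2.2.2.2⟩)
    (fun _ _ _ _ _ => D.Pe_nn _ _ _) (fun _ _ _ _ _ => D.Pg_nn _ _)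
    (fun _ _ _ _ => D.sum_y_Pg _) (D.T_e (fun q y w => D.Pg q y / D.Pe q w y))

lemma Vs_pos (ω : Q × Y × W × X × U) (h : 0 < D.joint ω) : 0 < D.Vs ω.1 ω.2.2.2.1 ω.2.1 := by
  have hu : 0 < D.pU ω.1 ω.2.2.2.2 := by
    refine (D.pU_nn _ _).lt_of_ne fun h0 => ?_
    simp [joint, ← h0] at h
  exact Finset.sum_pos' (fun _ _ => mul_nonneg (D.pU_nn _ _) (D.V_nn _ _ _ _))
    ⟨_, Finset.mem_univ _, mul_pos hu (D.pos_of_joint_pos ω h).1⟩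

/-- `I(W;Y|Q) ≤ I(X;Y|Q)`: by the chain rule, the left side is `I(W;Y|Q)`, and `Y` depends on `W` only
through `X` given `Q`. -/
lemma Jg_sub_Je_le : D.Jg - D.Je ≤
    ∑ ω, D.joint ω * Real.logb 2 (D.Vs ω.1 ω.2.2.2.1 ω.2.1 / D.Pg ω.1 ω.2.1) := by
  have h := D.kl (A := fun q y _ x _ => D.Vs q x y) (B := fun q y w _ _ => D.Pe q w y)
    (fun ω h => ⟨D.Vs_pos ω h, (D.pos_of_joint_pos ω h).2.2.2.1⟩)
    (fun _ _ _ _ _ => D.Vs_nn _ _ _) (fun _ _ _ _ _ => D.Pe_nn _ _ _)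
    (fun _ _ _ _ => D.Pe_sum _ _) (D.T_v (fun q y w x => D.Pe q w y / D.Vs q x y))
  rw [← sub_nonneg]
  refine h.trans (le_of_eq ?_)
  unfold Jg Je J
  rw [← Finset.sum_sub_distrib, ← Finset.sum_sub_distrib]
  refine Finset.sum_congr rfl fun ω _ => ?_
  rcases (D.joint_nn ω).eq_or_lt with h | h
  · simp [← h]
  obtain ⟨hv, ha, hd, he, hg⟩ := D.pos_of_joint_pos ω h
  have hs := D.Vs_pos ω h
  rw [Real.logb_div hs.ne' he.ne', Real.logb_div hs.ne' hg.ne', Real.logb_div hv.ne' he.ne',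
    Real.logb_div hv.ne' hg.ne']
  ring

end Link

/-! ### The Han-Kobayashi informations and the split of the rates -/

namespace Link
variable {Q W U X Z Y : Type*} [Fintype Q] [Fintype W] [Fintype U] [Fintype X]
    [Fintype Z] [Fintype Y] [DecidableEq Q] [DecidableEq W] [DecidableEq U] [DecidableEq X]
    [DecidableEq Y] (D : Link Q W U X Z Y)

/-- `I(A;Y|C)` is `J P`, when `π` carries `p` to the joint law of the link, `(A, C)` determines
`(q, x, u)`, and `P` is the law of `Y` given `C`. -/
lemma cmi_eq_J {Ω β γ : Type*} [Fintype Ω] [Fintype β] [Fintype γ] [DecidableEq β]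
    [DecidableEq γ] (p : Ω → ℝ) (hp : ∀ ω, 0 ≤ p ω) (π : Ω → Q × Y × W × X × U)
    (hπ : ∀ G : Q × Y × W × X × U → ℝ, ∑ ω, p ω * G (π ω) = ∑ t, D.joint t * G t)
    (A : Q → W → X → U → β) (C : Q → W → X → U → γ) (P : Q → W → U → Y → ℝ)
    (hV : ∀ q w x u q' w' x' u', A q w x u = A q' w' x' u' → C q w x u = C q' w' x' u' →
      q = q' ∧ x = x' ∧ u = u')
    (hP : ∀ q w x u q' w' x' u', C q w x u = C q' w' x' u' → P q w u = P q' w' u')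
    (hT : ∀ F : γ → Y → ℝ,
      D.T (fun q y _ x u => D.V q u x y) (fun q y w x u => F (C q w x u) y)
        = D.T (fun q y w _ u => P q w u y) (fun q y w x u => F (C q w x u) y))
    (hpos : ∀ ω, 0 < D.joint ω → 0 < P ω.1 ω.2.2.1 ω.2.2.2.2 ω.2.1) :
    cmi p (fun ω => A (π ω).1 (π ω).2.2.1 (π ω).2.2.2.1 (π ω).2.2.2.2) (fun ω => (π ω).2.1)
      (fun ω => C (π ω).1 (π ω).2.2.1 (π ω).2.2.2.1 (π ω).2.2.2.2) = D.J P := by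
  rw [cmi_eq p hp _ _ _ (fun ω => D.V (π ω).1 (π ω).2.2.2.2 (π ω).2.2.2.1)
    (fun ω => P (π ω).1 (π ω).2.2.1 (π ω).2.2.2.2)
    (fun ω ω' h h' => by
      obtain ⟨h1, h2, h3⟩ := hV _ _ _ _ _ _ _ _ h h'
      rw [h1, h2, h3])
    (fun ω ω' h => hP _ _ _ _ _ _ _ _ h)
    (fun F => by
      rw [hπ (fun t => F (A t.1 t.2.2.1 t.2.2.2.1 t.2.2.2.2, C t.1 t.2.2.1 t.2.2.2.1 t.2.2.2.2)
        t.2.1), hπ (fun t => ∑ y, D.V t.1 t.2.2.2.2 t.2.2.2.1 y *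
          F (A t.1 t.2.2.1 t.2.2.2.1 t.2.2.2.2, C t.1 t.2.2.1 t.2.2.2.1 t.2.2.2.2) y)]
      exact D.ker_of_T (F := fun q y w x u => F (A q w x u, C q w x u) y) rfl)
    (fun F => by
      rw [hπ (fun t => F (C t.1 t.2.2.1 t.2.2.2.1 t.2.2.2.2) t.2.1),
        hπ (fun t => ∑ y, P t.1 t.2.2.1 t.2.2.2.2 y *
          F (C t.1 t.2.2.1 t.2.2.2.1 t.2.2.2.2) y)]
      exact D.ker_of_T (hT F))]
  rw [hπ (fun t => Real.logb 2 (D.V t.1 t.2.2.2.2 t.2.2.2.1 t.2.1)),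
    hπ (fun t => Real.logb 2 (P t.1 t.2.2.1 t.2.2.2.2 t.2.1)), ← Finset.sum_sub_distrib]
  refine Finset.sum_congr rfl fun ω _ => ?_
  rcases (D.joint_nn ω).eq_or_lt with h | h
  · simp [← h]
  rw [Real.logb_div (D.pos_of_joint_pos ω h).1.ne' (hpos ω h).ne', mul_sub]

variable {Ω : Type*} [Fintype Ω] (p : Ω → ℝ) (hp : ∀ ω, 0 ≤ p ω) (π : Ω → Q × Y × W × X × U)
    (hπ : ∀ G : Q × Y × W × X × U → ℝ, ∑ ω, p ω * G (π ω) = ∑ t, D.joint t * G t)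
include hp hπ

lemma cmi_Ja : cmi p (fun ω => (π ω).2.2.2.1) (fun ω => (π ω).2.1)
    (fun ω => ((π ω).1, (π ω).2.2.1, (π ω).2.2.2.2)) = D.Ja :=
  D.cmi_eq_J p hp π hπ (fun _ _ x _ => x) (fun q w _ u => (q, w, u)) (fun q w u => D.Pa q w u)
    (by simp only [Prod.mk.injEq]; tauto) (by rintro _ _ _ _ _ _ _ _ ⟨⟩; rfl)
    (fun F => D.T_a (fun q y w u => F (q, w, u) y))
    (fun ω h => (D.pos_of_joint_pos ω h).2.1)

lemma cmi_Ja' : cmi p (fun ω => (π ω).2.2.2.1) (fun ω => (π ω).2.1)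
    (fun ω => ((π ω).1, (π ω).2.2.2.2, (π ω).2.2.1)) = D.Ja :=
  D.cmi_eq_J p hp π hπ (fun _ _ x _ => x) (fun q w _ u => (q, u, w)) (fun q w u => D.Pa q w u)
    (by simp only [Prod.mk.injEq]; tauto) (by rintro _ _ _ _ _ _ _ _ ⟨⟩; rfl)
    (fun F => D.T_a (fun q y w u => F (q, u, w) y))
    (fun ω h => (D.pos_of_joint_pos ω h).2.1)

lemma cmi_Jd : cmi p (fun ω => (π ω).2.2.2.1) (fun ω => (π ω).2.1)
    (fun ω => ((π ω).1, (π ω).2.2.2.2)) = D.Jd :=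
  D.cmi_eq_J p hp π hπ (fun _ _ x _ => x) (fun q _ _ u => (q, u)) (fun q _ u => D.Pd q u)
    (by simp only [Prod.mk.injEq]; tauto) (by rintro _ _ _ _ _ _ _ _ ⟨⟩; rfl)
    (fun F => D.T_d (fun q y u => F (q, u) y))
    (fun ω h => (D.pos_of_joint_pos ω h).2.2.1)

lemma cmi_Je : cmi p (fun ω => ((π ω).2.2.2.2, (π ω).2.2.2.1)) (fun ω => (π ω).2.1)
    (fun ω => ((π ω).1, (π ω).2.2.1)) = D.Je :=
  D.cmi_eq_J p hp π hπ (fun _ _ x u => (u, x)) (fun q w _ _ => (q, w)) (fun q w _ => D.Pe q w)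
    (by simp only [Prod.mk.injEq]; tauto) (by rintro _ _ _ _ _ _ _ _ ⟨⟩; rfl)
    (fun F => D.T_e (fun q y w => F (q, w) y))
    (fun ω h => (D.pos_of_joint_pos ω h).2.2.2.1)

lemma cmi_Jg : cmi p (fun ω => ((π ω).2.2.2.2, (π ω).2.2.2.1)) (fun ω => (π ω).2.1)
    (fun ω => (π ω).1) = D.Jg :=
  D.cmi_eq_J p hp π hπ (fun _ _ x u => (u, x)) (fun q _ _ _ => q) (fun q _ _ => D.Pg q)
    (by simp only [Prod.mk.injEq]; tauto) (by rintro _ _ _ _ _ _ _ _ ⟨⟩; rfl)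
    (fun F => D.T_g (fun q y => F q y))
    (fun ω h => (D.pos_of_joint_pos ω h).2.2.2.2)

end Link

/-- Fourier-Motzkin elimination of the private rates `k1`, `k2`, the common rates being `R1 - k1` and
`R2 - k2`. For receiver `i`, the letters `a`, `d`, `e`, `g` stand for `Ja`, `Jd`, `Je`, `Jg`. -/
lemma fm_case {a1 d1 e1 g1 a2 d2 e2 g2 R1 R2 : ℝ} (hR1 : 0 < R1) (hR2 : 0 < R2)
    (ha1 : 0 ≤ a1) (ha2 : 0 ≤ a2) (hae1 : a1 ≤ e1) (hae2 : a2 ≤ e2) (hdg1 : d1 ≤ g1)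
    (hdg2 : d2 ≤ g2)
    (h1 : R1 < d1) (h2 : R2 < d2) (h3 : R1 + R2 < a1 + g2) (h4 : R1 + R2 < a2 + g1)
    (h5 : R1 + R2 < e1 + e2) (h6 : 2 * R1 + R2 < a1 + g1 + e2)
    (h7 : R1 + 2 * R2 < a2 + g2 + e1) (hc1 : R1 < a1 + e2) (hc2 : R2 < a2 + e1) :
    ∃ k1 k2, 0 ≤ k1 ∧ k1 < R1 ∧ 0 ≤ k2 ∧ k2 < R2 ∧
      ((k1 = 0 ∨ (k1 < a1 ∧ k1 + (R2 - k2) < e1)) ∧ (k1 + (R2 - k2) + (R1 - k1) < g1)) ∧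
      ((k2 = 0 ∨ (k2 < a2 ∧ k2 + (R1 - k1) < e2)) ∧ (k2 + (R1 - k1) + (R2 - k2) < g2)) := by
  -- `a1 = 0` or `a2 = 0` leaves only the private rate zero for that user
  rcases ha1.eq_or_lt with h01 | h01
  · rcases ha2.eq_or_lt with h02 | h02
    · exact ⟨0, 0, by grind⟩
    obtain ⟨k, hk, hk'⟩ := exists_between (show max 0 (R1 + R2 - g1) < min R2 (min a2 (e2 - R1)) by
      refine max_lt (lt_min ?_ (lt_min ?_ ?_)) (lt_min ?_ (lt_min ?_ ?_)) <;> linarith)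
    simp only [max_lt_iff, lt_min_iff] at hk hk'
    exact ⟨0, k, le_rfl, hR1, by linarith, by linarith, ⟨.inl rfl, by linarith⟩,
      .inr ⟨by linarith, by linarith⟩, by linarith⟩
  · rcases ha2.eq_or_lt with h02 | h02
    · obtain ⟨k, hk, hk'⟩ := exists_between
        (show max 0 (R1 + R2 - g2) < min R1 (min a1 (e1 - R2)) by
        refine max_lt (lt_min ?_ (lt_min ?_ ?_)) (lt_min ?_ (lt_min ?_ ?_)) <;> linarith)
      simp only [max_lt_iff, lt_min_iff] at hk hk'
      exact ⟨k, 0, by linarith, by linarith, le_rfl, hR2,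
        ⟨.inr ⟨by linarith, by linarith⟩, by linarith⟩, .inl rfl, by linarith⟩
    -- Otherwise choose the difference `d = k1 - k2` first: it is bounded by the conditions with `e1`,
    -- `e2` and by the compatibility of the intervals allowed for `k1` and `k2`.
    obtain ⟨d, hd, hd'⟩ := exists_between
      (show max (R1 - e2) (max 0 (R1 + R2 - g2) - min R2 a2) <
        min (e1 - R2) (min R1 a1 - max 0 (R1 + R2 - g1)) by
        rcases max_cases 0 (R1 + R2 - g2) with ⟨p1, _⟩ | ⟨p1, _⟩ <;>
        rcases max_cases 0 (R1 + R2 - g1) with ⟨p2, _⟩ | ⟨p2, _⟩ <;>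
        rcases min_cases R1 a1 with ⟨p3, _⟩ | ⟨p3, _⟩ <;>
        rcases min_cases R2 a2 with ⟨p4, _⟩ | ⟨p4, _⟩ <;>
        rw [p1, p2, p3, p4] <;>
        refine max_lt (lt_min ?_ ?_) (lt_min ?_ ?_) <;> linarith)
    have hL1 : max 0 (R1 + R2 - g2) < min R1 a1 := by
      refine max_lt (lt_min ?_ ?_) (lt_min ?_ ?_) <;> linarith
    have hL2 : max 0 (R1 + R2 - g1) < min R2 a2 := by
      refine max_lt (lt_min ?_ ?_) (lt_min ?_ ?_) <;> linarith
    obtain ⟨hd1, hd2⟩ := max_lt_iff.1 hd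
    obtain ⟨hd3, hd4⟩ := lt_min_iff.1 hd'
    obtain ⟨k, hk, hk'⟩ := exists_between
      (show max (max 0 (R1 + R2 - g2)) (max 0 (R1 + R2 - g1) + d) <
        min (min R1 a1) (min R2 a2 + d) by
        refine max_lt (lt_min ?_ ?_) (lt_min ?_ ?_) <;> linarith)
    obtain ⟨hk1, hk2⟩ := max_lt_iff.1 hk
    obtain ⟨hk3, hk4⟩ := lt_min_iff.1 hk'
    have hm2 : max 0 (R1 + R2 - g1) < k - d := by linarith
    have hm4 : k - d < min R2 a2 := by linarith
    simp only [max_lt_iff, lt_min_iff] at hk1 hk3 hm2 hm4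
    exact ⟨k, k - d, by linarith, by linarith, by linarith, by linarith,
      ⟨.inr ⟨by linarith, by linarith⟩, by linarith⟩,
      .inr ⟨by linarith, by linarith⟩, by linarith⟩

/-! ### Dropping a common layer, and the three cases -/

namespace Link
variable {Q W U X Z Y : Type*} [Fintype Q] [Fintype W] [Fintype U] [Fintype X]
    [Fintype Z] [Fintype Y] (D : Link Q W U X Z Y)

/-- The link when its own user has no common layer. -/
noncomputable def mergeW : Link Q Unit U X Z Y where
  pQ := D.pQ
  pW _ _ := 1
  pU := D.pU
  pX _ q x := ∑ w, D.pW q w * D.pX w q x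
  pZ := D.pZ
  ch := D.ch
  pQ_nn := D.pQ_nn
  pQ_sum := D.pQ_sum
  pW_nn _ _ := zero_le_one
  pW_sum _ := by simp
  pU_nn := D.pU_nn
  pU_sum := D.pU_sum
  pX_nn _ _ _ := Finset.sum_nonneg fun _ _ => mul_nonneg (D.pW_nn _ _) (D.pX_nn _ _ _)
  pX_sum _ q := by
    rw [Finset.sum_comm]
    simp only [← Finset.mul_sum, D.pX_sum, mul_one, D.pW_sum]
  pZ_nn := D.pZ_nn
  pZ_sum := D.pZ_sum
  ch_nn := D.ch_nn
  ch_sum := D.ch_sum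

/-- The link when the interferer has no common layer and is treated as noise. -/
noncomputable def mergeU : Link Q W Unit X Z Y where
  pQ := D.pQ
  pW := D.pW
  pU _ _ := 1
  pX := D.pX
  pZ _ q z := ∑ u, D.pU q u * D.pZ u q z
  ch := D.ch
  pQ_nn := D.pQ_nn
  pQ_sum := D.pQ_sum
  pW_nn := D.pW_nn
  pW_sum := D.pW_sum
  pU_nn _ _ := zero_le_one
  pU_sum _ := by simp
  pX_nn := D.pX_nn
  pX_sum := D.pX_sum
  pZ_nn _ _ _ := Finset.sum_nonneg fun _ _ => mul_nonneg (D.pU_nn _ _) (D.pZ_nn _ _ _)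
  pZ_sum _ q := by
    rw [Finset.sum_comm]
    simp only [← Finset.mul_sum, D.pZ_sum, mul_one, D.pU_sum]
  ch_nn := D.ch_nn
  ch_sum := D.ch_sum

lemma wsum_merge {α β : Type*} [Fintype α] [Fintype β] (a : α → ℝ) (b : α → β → ℝ) (F : β → ℝ) :
    ∑ y, (∑ x, a x * b x y) * F y = ∑ x, a x * ∑ y, b x y * F y := by
  simp only [Finset.sum_mul, Finset.mul_sum, mul_assoc]
  exact Finset.sum_comm

lemma mergeW_V (q u x y) : D.mergeW.V q u x y = D.V q u x y := rfl

lemma mergeW_Pa (q) (w : Unit) (u y) : D.mergeW.Pa q w u y = D.Pd q u y :=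
  wsum_merge _ _ _

lemma mergeW_Pe (q) (w : Unit) (y) : D.mergeW.Pe q w y = D.Pg q y :=
  wsum_merge _ _ _

lemma mergeW_Ja : D.mergeW.Ja = D.Jd := by
  unfold Ja Jd J
  rw [sum_joint_mul, sum_joint_mul]
  simp only [mergeW_Pa, mergeW_V]
  refine Finset.sum_congr rfl fun q _ => ?_
  refine congrArg (D.pQ q * ·) (Finset.sum_congr rfl fun y _ => ?_)
  rw [Fintype.sum_unique]
  refine (one_mul _).trans (wsum_merge _ _ _)

lemma mergeW_Je : D.mergeW.Je = D.Jg := by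
  unfold Je Jg J
  rw [sum_joint_mul, sum_joint_mul]
  simp only [mergeW_Pe, mergeW_V]
  refine Finset.sum_congr rfl fun q _ => ?_
  refine congrArg (D.pQ q * ·) (Finset.sum_congr rfl fun y _ => ?_)
  rw [Fintype.sum_unique]
  refine (one_mul _).trans (wsum_merge _ _ _)

lemma mergeU_V (q) (u : Unit) (x y) : D.mergeU.V q u x y = D.Vs q x y :=
  wsum_merge _ _ _

lemma mergeU_Pd (q) (u : Unit) (y) : D.mergeU.Pd q u y = D.Pg q y := by
  unfold Pd Pa
  simp only [mergeU_V]
  rfl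

lemma mergeU_Pg (q) (y) : D.mergeU.Pg q y = D.Pg q y := by
  unfold Pg Pe
  simp only [mergeU_V, Fintype.sum_unique]
  refine Finset.sum_congr rfl fun w _ => congrArg (D.pW q w * ·)
    (Finset.sum_congr rfl fun x _ => congrArg (D.pX w q x * ·) (one_mul _))

lemma mergeU_Jd_eq_Jg : D.mergeU.Jd = D.mergeU.Jg := by
  unfold Jg Jd
  simp only [mergeU_Pd, mergeU_Pg]

/-- `I(W;Y|Q) ≤ I(X;Y|Q)`, the right side being the information when the interferer is noise. -/
lemma le_mergeU_Jd : D.Jg - D.Je ≤ D.mergeU.Jd := by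
  refine D.Jg_sub_Je_le.trans (le_of_eq ?_)
  unfold Jd J
  rw [sum_joint_eq_T, sum_joint_mul]
  simp only [mergeU_Pd, mergeU_V]
  rw [D.T_v (fun q y _ x => Real.logb 2 (D.Vs q x y / D.Pg q y))]
  refine Finset.sum_congr rfl fun q _ => congrArg (D.pQ q * ·) (Finset.sum_congr rfl fun y _ =>
    Finset.sum_congr rfl fun w _ => congrArg (D.pW q w * ·) (Finset.sum_congr rfl fun x _ =>
      congrArg (D.pX w q x * ·) ?_))
  rw [← Finset.sum_mul, D.pU_sum, Fintype.sum_unique]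
  rfl

end Link

namespace HK
variable {Q W1 W2 X1 X2 Y1 Y2 : Type*} [Fintype Q] [Fintype W1] [Fintype W2] [Fintype X1]
    [Fintype X2] [Fintype Y1] [Fintype Y2] (N : HK Q W1 W2 X1 X2 Y1 Y2)

/-- User 1 without a common layer, with the same law of `X1` given `Q`. -/
noncomputable def merge : HK Q Unit W2 X1 X2 Y1 Y2 where
  pQ := N.pQ
  pW1 _ _ := 1
  pW2 := N.pW2
  pX1 _ q x := ∑ w, N.pW1 q w * N.pX1 w q x
  pX2 := N.pX2
  chan := N.chan
  pQ_nn := N.pQ_nn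
  pQ_sum := N.pQ_sum
  pW1_nn _ _ := zero_le_one
  pW1_sum _ := by simp
  pW2_nn := N.pW2_nn
  pW2_sum := N.pW2_sum
  pX1_nn _ _ _ := Finset.sum_nonneg fun _ _ => mul_nonneg (N.pW1_nn _ _) (N.pX1_nn _ _ _)
  pX1_sum _ q := by
    rw [Finset.sum_comm]
    simp only [← Finset.mul_sum, N.pX1_sum, mul_one, N.pW1_sum]
  pX2_nn := N.pX2_nn
  pX2_sum := N.pX2_sum
  chan_nn := N.chan_nn
  chan_sum := N.chan_sum

section
variable {S T : Type*} [Fintype S] [Fintype T] [DecidableEq S]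
    [DecidableEq T] (pST : S → T → ℝ)

lemma admissible_of_swap (h : ICAdmissible (fun t s => pST s t) N.swap.chan) :
    ICAdmissible pST N.chan := by
  intro ε hε hε'
  obtain ⟨n0, h⟩ := h ε hε hε'
  refine ⟨n0, fun n hn => ?_⟩
  obtain ⟨f2, f1, φ2, φ1, h⟩ := h n hn
  refine ⟨f1, f2, φ1, φ2, ?_⟩
  rw [max_comm, N.icPe2_eq pST n f1 f2 φ2]
  rwa [N.swap.icPe2_eq (fun t s => pST s t) n f2 f1 φ1] at h

variable (hnn : ∀ s t, 0 ≤ pST s t) (hsum : ∑ s, ∑ t, pST s t = 1) {R1 R2 : ℝ}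
  (hS : pmfEnt (fun s => ∑ t, pST s t) < R1) (hT : pmfEnt (fun t => ∑ s, pST s t) < R2)
include hnn hsum hS hT

/-- Both users split their rates. -/
lemma admissible_case_one (hR1 : 0 < R1) (hR2 : 0 < R2)
    (h1 : R1 < N.link1.Jd) (h2 : R2 < N.link2.Jd)
    (h3 : R1 + R2 < N.link1.Ja + N.link2.Jg) (h4 : R1 + R2 < N.link2.Ja + N.link1.Jg)
    (h5 : R1 + R2 < N.link1.Je + N.link2.Je)
    (h6 : 2 * R1 + R2 < N.link1.Ja + N.link1.Jg + N.link2.Je)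
    (h7 : R1 + 2 * R2 < N.link2.Ja + N.link2.Jg + N.link1.Je)
    (hc1 : R1 < N.link1.Ja + N.link2.Je) (hc2 : R2 < N.link2.Ja + N.link1.Je) :
    ICAdmissible pST N.chan := by
  obtain ⟨k1, k2, hk1, hk1', hk2, hk2', ⟨ha1, hg1⟩, ha2, hg2⟩ :=
    fm_case hR1 hR2 N.link1.Ja_nn N.link2.Ja_nn N.link1.Ja_le_Je N.link2.Ja_le_Je
    N.link1.Jd_le_Jg N.link2.Jd_le_Jg h1 h2 h3 h4 h5 h6 h7 hc1 hc2
  refine N.admissible_of_rates pST hnn hsum (k1 := k1) (c1 := R1 - k1) (k2 := k2) (c2 := R2 - k2)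
    hk1 (by linarith) hk2 (by linarith) (by linarith) (by linarith) ⟨ha1, .inr ⟨?_, ?_⟩⟩
    ⟨ha2, .inr ⟨?_, ?_⟩⟩ <;> linarith

/-- User 1 sends everything privately, user 2 sends everything as a common message. -/
lemma admissible_case_two (hR1 : 0 < R1) (hR2 : 0 < R2)
    (h1 : R1 < N.link1.Jd) (h2 : R1 + R2 < N.link1.Jg) (h3 : R2 < N.link2.Jg - N.link2.Je) :
    ICAdmissible pST N.chan := by
  refine N.merge.admissible_of_rates pST hnn hsum (k1 := R1) (c1 := 0) (k2 := 0) (c2 := R2)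
    hR1.le le_rfl le_rfl hR2.le (by simpa) (by simpa) ⟨.inr ⟨?_, ?_⟩, .inl rfl⟩
    ⟨.inl rfl, .inr ⟨?_, ?_⟩⟩
  · exact h1.trans_eq N.link1.mergeW_Ja.symm
  · exact h2.trans_eq N.link1.mergeW_Je.symm
  · rw [zero_add]
    exact h3.trans_le N.link2.le_mergeU_Jd
  · rw [zero_add, add_zero]
    exact (h3.trans_le N.link2.le_mergeU_Jd).trans_eq N.link2.mergeU_Jd_eq_Jg

/-- If a bound of `admissible_case_one` fails, subtracting it from the two inequalities that contain its
right side gives the hypotheses of `admissible_case_two`. -/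
lemma admissible_of_HK (hR1 : 0 < R1) (hR2 : 0 < R2)
    (h1 : R1 < N.link1.Jd) (h2 : R2 < N.link2.Jd)
    (h3 : R1 + R2 < N.link1.Ja + N.link2.Jg) (h4 : R1 + R2 < N.link2.Ja + N.link1.Jg)
    (h5 : R1 + R2 < N.link1.Je + N.link2.Je)
    (h6 : 2 * R1 + R2 < N.link1.Ja + N.link1.Jg + N.link2.Je)
    (h7 : R1 + 2 * R2 < N.link2.Ja + N.link2.Jg + N.link1.Je) :
    ICAdmissible pST N.chan := by
  rcases lt_or_ge R1 (N.link1.Ja + N.link2.Je) with hc1 | hc1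
  · rcases lt_or_ge R2 (N.link2.Ja + N.link1.Je) with hc2 | hc2
    · exact N.admissible_case_one pST hnn hsum hS hT hR1 hR2 h1 h2 h3 h4 h5 h6 h7 hc1 hc2
    · refine N.admissible_of_swap pST (N.swap.admissible_case_two (fun t s => pST s t)
        (fun t s => hnn s t) (by rw [Finset.sum_comm]; exact hsum) hT hS hR2 hR1 h2 (by linarith)
        ?_)
      show R1 < N.link1.Jg - N.link1.Je
      linarith
  · exact N.admissible_case_two pST hnn hsum hS hT hR1 hR2 h1 (by linarith) (by linarith)

end

/-- The joint law of `(Q, W1, W2, X1, X2, Y1, Y2)`. -/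
def law (ω : Omega7 Q W1 W2 X1 X2 Y1 Y2) : ℝ :=
  N.pQ (qQ ω) * N.pW1 (qQ ω) (qW1 ω) * N.pW2 (qQ ω) (qW2 ω) * N.pX1 (qW1 ω) (qQ ω) (qX1 ω) *
    N.pX2 (qW2 ω) (qQ ω) (qX2 ω) * N.chan (qX1 ω) (qX2 ω) (qY1 ω) (qY2 ω)

lemma law_nn (ω) : 0 ≤ N.law ω :=
  mul_nonneg (mul_nonneg (mul_nonneg (mul_nonneg (mul_nonneg (N.pQ_nn _) (N.pW1_nn _ _))
    (N.pW2_nn _ _)) (N.pX1_nn _ _ _)) (N.pX2_nn _ _ _)) (N.chan_nn _ _ _ _)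

/-- Receiver 1 sees the joint law of its link. -/
lemma push1 (G : Q × Y1 × W1 × X1 × W2 → ℝ) :
    ∑ ω : Omega7 Q W1 W2 X1 X2 Y1 Y2, N.law ω * G (qQ ω, qY1 ω, qW1 ω, qX1 ω, qW2 ω)
      = ∑ t, N.link1.joint t * G t := by
  rw [Link.sum_joint_mul]
  simp only [Fintype.sum_prod_type, law, qQ, qW1, qW2, qX1, qX2, qY1, qY2, Link.V, link1,
    Finset.mul_sum, Finset.sum_mul]
  refine Finset.sum_congr rfl fun q _ => ?_
  -- (w1, w2, x1, x2, y1, y2) to (y1, w1, x1, w2, x2, y2)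
  have e1 : ∀ F : W1 → W2 → X1 → X2 → Y1 → Y2 → ℝ,
      ∑ w1, ∑ w2, ∑ x1, ∑ x2, ∑ y1, ∑ y2, F w1 w2 x1 x2 y1 y2
        = ∑ y1, ∑ w1, ∑ x1, ∑ w2, ∑ x2, ∑ y2, F w1 w2 x1 x2 y1 y2 := by
    intro F
    rw [Finset.sum_comm (s := (Finset.univ : Finset Y1))]
    refine Finset.sum_congr rfl fun w1 _ => ?_
    rw [Finset.sum_comm (s := (Finset.univ : Finset Y1)),
      Finset.sum_comm (s := (Finset.univ : Finset W2))]
    refine Finset.sum_congr rfl fun x1 _ => ?_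
    rw [Finset.sum_comm (s := (Finset.univ : Finset Y1))]
    refine Finset.sum_congr rfl fun w2 _ => ?_
    rw [Finset.sum_comm (s := (Finset.univ : Finset Y1))]
  rw [e1]
  refine Finset.sum_congr rfl fun y1 _ => Finset.sum_congr rfl fun w1 _ =>
    Finset.sum_congr rfl fun x1 _ => Finset.sum_congr rfl fun w2 _ =>
    Finset.sum_congr rfl fun x2 _ => Finset.sum_congr rfl fun y2 _ => ?_
  ring

/-- Receiver 2 sees the joint law of its link. -/
lemma push2 (G : Q × Y2 × W2 × X2 × W1 → ℝ) :
    ∑ ω : Omega7 Q W1 W2 X1 X2 Y1 Y2, N.law ω * G (qQ ω, qY2 ω, qW2 ω, qX2 ω, qW1 ω)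
      = ∑ t, N.link2.joint t * G t := by
  rw [← N.swap.push1 G]
  let e : Omega7 Q W1 W2 X1 X2 Y1 Y2 ≃ Omega7 Q W2 W1 X2 X1 Y2 Y1 :=
    { toFun := fun ω => (qQ ω, qW2 ω, qW1 ω, qX2 ω, qX1 ω, qY2 ω, qY1 ω)
      invFun := fun ω => (qQ ω, qW2 ω, qW1 ω, qX2 ω, qX1 ω, qY2 ω, qY1 ω)
      left_inv := fun _ => rfl
      right_inv := fun _ => rfl }
  refine Fintype.sum_equiv e _ _ fun ω => ?_
  refine congrArg (· * G _) ?_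
  simp only [law, e, Equiv.coe_fn_mk, swap, qQ, qW1, qW2, qX1, qX2, qY1, qY2]
  ring

end HK

lemma pmfEnt_nonneg {α : Type*} [Fintype α] (q : α → ℝ) (hq : ∀ a, 0 ≤ q a)
    (hs : ∑ a, q a = 1) : 0 ≤ pmfEnt q := by
  refine Finset.sum_nonneg fun a _ => ?_
  have h1 : q a ≤ 1 := hs ▸ Finset.single_le_sum (fun a _ => hq a) (Finset.mem_univ a)
  have h2 := Real.logb_nonpos (b := 2) (by norm_num) (hq a) h1
  rw [neg_nonneg]
  exact mul_nonpos_of_nonneg_of_nonpos (hq a) h2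

/-- **Theorem 1 contains the Han-Kobayashi region.**  If `S` and `T` are independent,
`R1 = H(S)`, `R2 = H(T)`, and there exist `Q, W1, W2, X1, X2` distributed as
`p(q)·p(w1|q)·p(w2|q)·p(x1|w1,q)·p(x2|w2,q)` (independent of the source) satisfying the
seven Han-Kobayashi inequalities, then the source `(S,T)` is admissible for the
interference channel. -/
theorem theorem1_contains_HK_region
    {S T Q W1 W2 X1 X2 Y1 Y2 : Type*}
    [Fintype S] [Fintype T] [Fintype Q] [Fintype W1] [Fintype W2]
    [Fintype X1] [Fintype X2] [Fintype Y1] [Fintype Y2]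
    [DecidableEq S] [DecidableEq T] [DecidableEq Q] [DecidableEq W1]
    [DecidableEq W2] [DecidableEq X1] [DecidableEq X2] [DecidableEq Y1] [DecidableEq Y2]
    -- the source, with S and T independent
    (pST : S → T → ℝ) (hpSTnn : ∀ s t, 0 ≤ pST s t) (hpSTsum : ∑ s : S, ∑ t : T, pST s t = 1)
    (hindep : ∀ s t, pST s t = (∑ t' : T, pST s t') * (∑ s' : S, pST s' t))
    -- the rates
    (R1 R2 : ℝ)
    (hR1 : R1 = pmfEnt (fun s => ∑ t : T, pST s t))
    (hR2 : R2 = pmfEnt (fun t => ∑ s : S, pST s t))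
    -- the channel
    (chan : X1 → X2 → Y1 → Y2 → ℝ) (hchannn : ∀ x1 x2 y1 y2, 0 ≤ chan x1 x2 y1 y2)
    (hchansum : ∀ x1 x2, ∑ y1 : Y1, ∑ y2 : Y2, chan x1 x2 y1 y2 = 1)
    -- the Han-Kobayashi input distribution
    (pQ : Q → ℝ) (hpQnn : ∀ q, 0 ≤ pQ q) (hpQsum : ∑ q : Q, pQ q = 1)
    (pW1 : Q → W1 → ℝ) (hpW1nn : ∀ q w1, 0 ≤ pW1 q w1)
    (hpW1sum : ∀ q, ∑ w1 : W1, pW1 q w1 = 1)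
    (pW2 : Q → W2 → ℝ) (hpW2nn : ∀ q w2, 0 ≤ pW2 q w2)
    (hpW2sum : ∀ q, ∑ w2 : W2, pW2 q w2 = 1)
    (pX1 : W1 → Q → X1 → ℝ) (hpX1nn : ∀ w1 q x1, 0 ≤ pX1 w1 q x1)
    (hpX1sum : ∀ w1 q, ∑ x1 : X1, pX1 w1 q x1 = 1)
    (pX2 : W2 → Q → X2 → ℝ) (hpX2nn : ∀ w2 q x2, 0 ≤ pX2 w2 q x2)
    (hpX2sum : ∀ w2 q, ∑ x2 : X2, pX2 w2 q x2 = 1)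
    -- the joint distribution of the channel variables
    (p : Omega7 Q W1 W2 X1 X2 Y1 Y2 → ℝ)
    (hp : ∀ q w1 w2 x1 x2 y1 y2,
      p (q, w1, w2, x1, x2, y1, y2) =
        pQ q * pW1 q w1 * pW2 q w2 * pX1 w1 q x1 * pX2 w2 q x2 * chan x1 x2 y1 y2)
    -- the seven Han-Kobayashi inequalities
    (h1 : R1 < cmi p qX1 qY1 (fun ω => (qQ ω, qW2 ω)))
    (h2 : R2 < cmi p qX2 qY2 (fun ω => (qQ ω, qW1 ω)))
    (h3 : R1 + R2 < cmi p qX1 qY1 (fun ω => (qQ ω, qW1 ω, qW2 ω))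
        + cmi p (fun ω => (qW1 ω, qX2 ω)) qY2 qQ)
    (h4 : R1 + R2 < cmi p qX2 qY2 (fun ω => (qQ ω, qW1 ω, qW2 ω))
        + cmi p (fun ω => (qW2 ω, qX1 ω)) qY1 qQ)
    (h5 : R1 + R2 < cmi p (fun ω => (qW2 ω, qX1 ω)) qY1 (fun ω => (qQ ω, qW1 ω))
        + cmi p (fun ω => (qW1 ω, qX2 ω)) qY2 (fun ω => (qQ ω, qW2 ω)))
    (h6 : 2 * R1 + R2 < cmi p qX1 qY1 (fun ω => (qQ ω, qW1 ω, qW2 ω))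
        + cmi p (fun ω => (qW2 ω, qX1 ω)) qY1 qQ
        + cmi p (fun ω => (qW1 ω, qX2 ω)) qY2 (fun ω => (qQ ω, qW2 ω)))
    (h7 : R1 + 2 * R2 < cmi p qX2 qY2 (fun ω => (qQ ω, qW1 ω, qW2 ω))
        + cmi p (fun ω => (qW1 ω, qX2 ω)) qY2 qQ
        + cmi p (fun ω => (qW2 ω, qX1 ω)) qY1 (fun ω => (qQ ω, qW1 ω))) :
    ICAdmissible pST chan := by
  let N : HK Q W1 W2 X1 X2 Y1 Y2 :=
    ⟨pQ, pW1, pW2, pX1, pX2, chan, hpQnn, hpQsum, hpW1nn, hpW1sum, hpW2nn, hpW2sum,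
      hpX1nn, hpX1sum, hpX2nn, hpX2sum, hchannn, hchansum⟩
  have hpN : p = N.law := funext fun ⟨q, w1, w2, x1, x2, y1, y2⟩ => hp q w1 w2 x1 x2 y1 y2
  rw [hpN] at h1 h2 h3 h4 h5 h6 h7
  have a1 := N.link1.cmi_Ja N.law N.law_nn (fun ω => (qQ ω, qY1 ω, qW1 ω, qX1 ω, qW2 ω)) N.push1
  have d1 := N.link1.cmi_Jd N.law N.law_nn (fun ω => (qQ ω, qY1 ω, qW1 ω, qX1 ω, qW2 ω)) N.push1
  have e1 := N.link1.cmi_Je N.law N.law_nn (fun ω => (qQ ω, qY1 ω, qW1 ω, qX1 ω, qW2 ω)) N.push1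
  have g1 := N.link1.cmi_Jg N.law N.law_nn (fun ω => (qQ ω, qY1 ω, qW1 ω, qX1 ω, qW2 ω)) N.push1
  have a2 := N.link2.cmi_Ja' N.law N.law_nn (fun ω => (qQ ω, qY2 ω, qW2 ω, qX2 ω, qW1 ω)) N.push2
  have d2 := N.link2.cmi_Jd N.law N.law_nn (fun ω => (qQ ω, qY2 ω, qW2 ω, qX2 ω, qW1 ω)) N.push2
  have e2 := N.link2.cmi_Je N.law N.law_nn (fun ω => (qQ ω, qY2 ω, qW2 ω, qX2 ω, qW1 ω)) N.push2
  have g2 := N.link2.cmi_Jg N.law N.law_nn (fun ω => (qQ ω, qY2 ω, qW2 ω, qX2 ω, qW1 ω)) N.push2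
  replace h1 : R1 < N.link1.Jd := h1.trans_eq d1
  replace h2 : R2 < N.link2.Jd := h2.trans_eq d2
  replace h3 : R1 + R2 < N.link1.Ja + N.link2.Jg := h3.trans_eq (congrArg₂ _ a1 g2)
  replace h4 : R1 + R2 < N.link2.Ja + N.link1.Jg := h4.trans_eq (congrArg₂ _ a2 g1)
  replace h5 : R1 + R2 < N.link1.Je + N.link2.Je := h5.trans_eq (congrArg₂ _ e1 e2)
  replace h6 : 2 * R1 + R2 < N.link1.Ja + N.link1.Jg + N.link2.Je :=
    h6.trans_eq (congrArg₂ _ (congrArg₂ _ a1 g1) e2)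
  replace h7 : R1 + 2 * R2 < N.link2.Ja + N.link2.Jg + N.link1.Je :=
    h7.trans_eq (congrArg₂ _ (congrArg₂ _ a2 g2) e1)
  have hR1nn : 0 ≤ R1 := hR1 ▸ pmfEnt_nonneg _
    (fun s => Finset.sum_nonneg fun t _ => hpSTnn s t) hpSTsum
  have hR2nn : 0 ≤ R2 := hR2 ▸ pmfEnt_nonneg _
    (fun t => Finset.sum_nonneg fun s _ => hpSTnn s t) (by rw [Finset.sum_comm]; exact hpSTsum)
  -- All seven inequalities are strict, so both rates can be raised by a common `m / 4`; the
  -- divisor exceeds the largest sum of coefficients of `R1` and `R2`.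
  obtain ⟨m, hm0, hm⟩ : ∃ m : ℝ, 0 < m ∧ m ≤ N.link1.Jd - R1 ∧ m ≤ N.link2.Jd - R2 ∧
      m ≤ N.link1.Ja + N.link2.Jg - (R1 + R2) ∧ m ≤ N.link2.Ja + N.link1.Jg - (R1 + R2) ∧
      m ≤ N.link1.Je + N.link2.Je - (R1 + R2) ∧
      m ≤ N.link1.Ja + N.link1.Jg + N.link2.Je - (2 * R1 + R2) ∧
      m ≤ N.link2.Ja + N.link2.Jg + N.link1.Je - (R1 + 2 * R2) := by
    refine ⟨_, ?_, le_min_iff.1 (le_refl (min _ (min _ (min _ (min _ (min _ (min _ _))))))) |>.imp id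
      fun h => (le_min_iff.1 h).imp id fun h => (le_min_iff.1 h).imp id fun h =>
      (le_min_iff.1 h).imp id fun h => (le_min_iff.1 h).imp id fun h => le_min_iff.1 h⟩
    simp only [lt_min_iff, sub_pos]
    exact ⟨h1, h2, h3, h4, h5, h6, h7⟩
  obtain ⟨m1, m2, m3, m4, m5, m6, m7⟩ := hm
  refine N.admissible_of_HK pST hpSTnn hpSTsum (R1 := R1 + m / 4) (R2 := R2 + m / 4)
    ?_ ?_ ?_ ?_ ?_ ?_ ?_ ?_ ?_ ?_ ?_ <;> linarith
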